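/- Lemma 2.4(iii): Let v be a classical solution of v_t = v_rr + ((m−1)/r) v_r − (b(r,t)/r²) v on [0,R] × (t1,t2), not identically zero, satisfying the boundary condition (1.5). Then for any t0 ∈ (t1,t2) there exists ε0 > 0 such that the zero number Z(v(·,t)) is constant as t varies in the interval (t0 − ε0, t0). -/

import Mathlib

open Set Filter

open scoped Topology

/-!
Let `N(t) ∈ ℕ ∪ {∞}` be the largest length of a sequence of points of `(0, R)` along which
`v(·, t)` alternates in sign. If `v(·, t)` alternates along `x₁ < ⋯ < xₙ`, then the maximum
principle for the product `∏ᵢ max ((-1) ^ i σ v(yᵢ, s)) 0` over all ordered tuples `y₁ ≤ ⋯ ≤ yₙ`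
produces such a tuple at every earlier time `s`, so `N` is nonincreasing. Being valued in a
well-ordered set, `N` is constant on some interval `(T, t0)`.

While `N` is constant and finite, `v` has exactly one sign change between consecutive points of a
maximal alternation, and also had only one there shortly before. Such a sign change is carried by a
single zero: two zeros could be separated by an affine function `w`, and at an earlier time at which
the zero is nondegenerate `v - ε w` would still change sign only once, which contradicts the
maximum principle. If `N` is infinite, so is the number of zeros. Hence the number of interior zeros
is determined by `N`, and the boundary condition fixes the endpoint zeros.

The potential `-b / r ^ 2` is unbounded near `r = 0`, but only from below because
`b(0, t) = m - 1 > 0`, and the maximum principle tolerates this.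
-/

/-! ### A maximum principle for ordered tuples -/

lemma deriv_deriv_nonpos_of_isLocalMax {f : ℝ → ℝ} {x : ℝ} (h : IsLocalMax f x)
    (hf : ContinuousAt f x) : deriv (deriv f) x ≤ 0 := by
  by_contra! hpos
  have hmin : IsLocalMin f x := isLocalMin_of_deriv_deriv_pos hpos h.deriv_eq_zero hf
  have hconst : f =ᶠ[𝓝 x] fun _ => f x := by
    filter_upwards [h, hmin] with y hmax hmin using le_antisymm hmax hmin
  have hzero : deriv (deriv f) x = 0 := by simpa using hconst.deriv.deriv_eq
  exact hpos.ne' hzero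

lemma nonneg_of_hasDerivAt_of_eventually_le {f : ℝ → ℝ} {f' t : ℝ} (hf : HasDerivAt f f' t)
    (h : ∀ᶠ s in 𝓝[<] t, f s ≤ f t) : 0 ≤ f' := by
  refine ge_of_tendsto (hasDerivAt_iff_tendsto_slope_left_right.1 hf).1 ?_
  filter_upwards [h, self_mem_nhdsWithin] with s hs hst
  rw [slope_def_field]
  exact div_nonneg_of_nonpos (sub_nonpos.2 hs) (sub_nonpos.2 (le_of_lt hst))

section Product

variable {ι : Type*} [Fintype ι]

lemma pos_of_prod_max_zero_pos {a : ι → ℝ} (h : 0 < ∏ i, max (a i) 0) (i : ι) : 0 < a i := by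
  by_contra! hi
  exact h.ne' (Finset.prod_eq_zero (Finset.mem_univ i) (max_eq_right hi))

lemma prod_max_zero_eq_prod {a : ι → ℝ} (h : ∀ i, 0 ≤ a i) : ∏ i, max (a i) 0 = ∏ i, a i :=
  Finset.prod_congr rfl fun i _ => max_eq_left (h i)

lemma isLocalMax_apply_of_isLocalMax_prod {f : ι → ℝ → ℝ} {x : ι → ℝ}
    (hmax : IsLocalMax (fun y : ι → ℝ => ∏ i, max (f i (y i)) 0) x)
    (hpos : ∀ i, 0 < f i (x i)) (i : ι) : IsLocalMax (f i) (x i) := by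
  classical
  have hcont : Continuous (Function.update x i) := continuous_const.update i continuous_id
  have hupdate : Tendsto (Function.update x i) (𝓝 (x i)) (𝓝 x) := by
    simpa using hcont.tendsto (x i)
  filter_upwards [hupdate.eventually hmax] with y hy
  set P : ℝ := ∏ j ∈ Finset.univ.erase i, max (f j (x j)) 0
  have hP : 0 < P := Finset.prod_pos fun j _ => lt_max_of_lt_left (hpos j)
  have hsplit (z : ℝ) :
      ∏ j, max (f j (Function.update x i z j)) 0 = max (f i z) 0 * P := by
    rw [← Finset.mul_prod_erase _ _ (Finset.mem_univ i), Function.update_self]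
    congr 1
    refine Finset.prod_congr rfl fun j hj => ?_
    rw [Function.update_of_ne (Finset.ne_of_mem_erase hj)]
  have hx := hsplit (x i)
  rw [Function.update_eq_self] at hx
  rw [hsplit, hx, max_eq_left (hpos i).le] at hy
  exact (le_max_left _ _).trans (le_of_mul_le_mul_right hy hP)

lemma exists_hasDerivAt_exp_mul_prod_neg {f : ι → ℝ → ℝ} {d : ι → ℝ} {C l t : ℝ}
    (hf : ∀ i, HasDerivAt (f i) (d i) t) (hpos : ∀ i, 0 < f i t) (hd : ∀ i, d i ≤ C * f i t)
    (hl : Fintype.card ι * C < l) :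
    ∃ D < 0, HasDerivAt (fun s => Real.exp (-l * s) * ∏ i, f i s) D t := by
  classical
  have hprod : HasDerivAt (fun s => ∏ i, f i s)
      (∑ i, (∏ j ∈ Finset.univ.erase i, f j t) • d i) t :=
    HasDerivAt.fun_finsetProd fun i _ => hf i
  have hexp : HasDerivAt (fun s => Real.exp (-l * s)) (Real.exp (-l * t) * -l) t := by
    simpa using ((hasDerivAt_id t).const_mul (-l)).exp
  refine ⟨_, ?_, hexp.mul hprod⟩
  set P : ℝ := ∏ i, f i t
  have hP : 0 < P := Finset.prod_pos fun i _ => hpos i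
  have hterm (i : ι) : (∏ j ∈ Finset.univ.erase i, f j t) • d i ≤ C * P := by
    have herase : 0 < ∏ j ∈ Finset.univ.erase i, f j t := Finset.prod_pos fun j _ => hpos j
    calc (∏ j ∈ Finset.univ.erase i, f j t) • d i
        ≤ (∏ j ∈ Finset.univ.erase i, f j t) * (C * f i t) :=
          mul_le_mul_of_nonneg_left (hd i) herase.le
      _ = C * P := by
          rw [mul_left_comm, mul_comm _ (f i t), Finset.mul_prod_erase _ (fun j => f j t)
            (Finset.mem_univ i)]
  have hsum : ∑ i, (∏ j ∈ Finset.univ.erase i, f j t) • d i ≤ Fintype.card ι * C * P := by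
    simpa [mul_assoc] using Finset.sum_le_card_nsmul Finset.univ _ _ fun i _ => hterm i
  have hlP : Fintype.card ι * C * P < l * P := mul_lt_mul_of_pos_right hl hP
  calc Real.exp (-l * t) * -l * P
        + Real.exp (-l * t) * ∑ i, (∏ j ∈ Finset.univ.erase i, f j t) • d i
      = Real.exp (-l * t) * (∑ i, (∏ j ∈ Finset.univ.erase i, f j t) • d i - l * P) := by ring
    _ < 0 := mul_neg_of_pos_of_neg (Real.exp_pos _) (by linarith)

end Product

section OrderedTuples

variable {n : ℕ}

/-- The weakly increasing `n`-tuples with entries in `[α, β]`. -/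
def orderedTuples (n : ℕ) (α β : ℝ) : Set (Fin n → ℝ) :=
  {x | Monotone x} ∩ Icc (fun _ => α) fun _ => β

variable {α β : ℝ} {x : Fin n → ℝ}

lemma isCompact_orderedTuples : IsCompact (orderedTuples n α β) :=
  isCompact_Icc.inter_left isClosed_monotone

lemma mem_Icc_of_mem_orderedTuples (hx : x ∈ orderedTuples n α β) (i : Fin n) :
    x i ∈ Icc α β :=
  ⟨hx.2.1 i, hx.2.2 i⟩

lemma orderedTuples_mem_nhds (hx : StrictMono x) (hxI : ∀ i, x i ∈ Ioo α β) :
    orderedTuples n α β ∈ 𝓝 x := by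
  have hmem : ∀ᶠ y in 𝓝 x, ∀ i, y i ∈ Ioo α β :=
    eventually_all.2 fun i => (continuous_apply i).continuousAt.eventually
      (Ioo_mem_nhds (hxI i).1 (hxI i).2)
  have hlt : ∀ᶠ y in 𝓝 x, ∀ i j, i < j → y i < y j :=
    eventually_all.2 fun i => eventually_all.2 fun j => eventually_imp_distrib_left.2 fun hij =>
      (continuous_apply i).continuousAt.eventually_lt (continuous_apply j).continuousAt (hx hij)
  filter_upwards [hmem, hlt] with y hyI hy
  exact ⟨StrictMono.monotone fun i j => hy i j, fun i => (hyI i).1.le, fun i => (hyI i).2.le⟩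

lemma strictMono_of_mem_orderedTuples_of_pos {f : Fin n → ℝ → ℝ} (hx : x ∈ orderedTuples n α β)
    (hpos : ∀ i, 0 < f i (x i))
    (hadj : ∀ i j : Fin n, (i : ℕ) + 1 = j → ∀ x ∈ Icc α β, 0 < f i x → f j x ≤ 0)
    (hα : ∀ i : Fin n, (i : ℕ) = 0 → f i α ≤ 0) (hβ : ∀ i : Fin n, (i : ℕ) + 1 = n → f i β ≤ 0) :
    StrictMono x ∧ ∀ i, x i ∈ Ioo α β := by
  refine ⟨fun i j hij => ?_, fun i => ⟨?_, ?_⟩⟩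
  · let k : Fin n := ⟨i + 1, (Nat.succ_le_of_lt hij).trans_lt j.2⟩
    have hne : x i ≠ x k := fun h =>
      (hpos k).not_ge (hadj i k rfl _ (mem_Icc_of_mem_orderedTuples hx k) (h ▸ hpos i))
    exact ((hx.1 (show i ≤ k from Nat.le_succ i)).lt_of_ne hne).trans_le
      (hx.1 (show k ≤ j from Nat.succ_le_of_lt hij))
  · let k : Fin n := ⟨0, i.pos⟩
    have hne : α ≠ x k := fun h => (hpos k).not_ge (h ▸ hα k rfl)
    exact ((hx.2.1 k).lt_of_ne hne).trans_le (hx.1 (show k ≤ i from Nat.zero_le i))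
  · let k : Fin n := ⟨n - 1, Nat.sub_one_lt_of_lt i.2⟩
    have hk : (k : ℕ) + 1 = n := Nat.sub_add_cancel i.pos
    have hne : x k ≠ β := fun h => (hpos k).not_ge (h ▸ hβ k hk)
    exact (hx.1 (show i ≤ k from Nat.le_sub_one_of_lt i.2)).trans_lt ((hx.2.2 k).lt_of_ne hne)

variable {u : Fin n → ℝ → ℝ → ℝ} {T0 T1 C : ℝ}

lemma exists_isMaxOn_exp_mul_prod (l : ℝ)
    (hcont : ∀ i, ContinuousOn (fun p : ℝ × ℝ => u i p.1 p.2) (Icc α β ×ˢ Icc T0 T1))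
    {x₁ : Fin n → ℝ} {t₁ : ℝ} (hx₁ : x₁ ∈ orderedTuples n α β) (ht₁ : t₁ ∈ Icc T0 T1)
    (hpos₁ : ∀ i, 0 < u i (x₁ i) t₁) :
    ∃ x ∈ orderedTuples n α β, ∃ t ∈ Icc T0 T1, (∀ i, 0 < u i (x i) t) ∧
      IsMaxOn (fun p : (Fin n → ℝ) × ℝ => Real.exp (-l * p.2) * ∏ i, max (u i (p.1 i) p.2) 0)
        (orderedTuples n α β ×ˢ Icc T0 T1) (x, t) := by
  have hΦ : ContinuousOn
      (fun p : (Fin n → ℝ) × ℝ => Real.exp (-l * p.2) * ∏ i, max (u i (p.1 i) p.2) 0)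
      (orderedTuples n α β ×ˢ Icc T0 T1) := by
    refine ContinuousOn.mul (by fun_prop) (continuousOn_finsetProd _ fun i _ =>
      ContinuousOn.sup ?_ continuousOn_const)
    exact (hcont i).comp (f := fun p : (Fin n → ℝ) × ℝ => (p.1 i, p.2)) (by fun_prop)
      fun p hp => ⟨mem_Icc_of_mem_orderedTuples hp.1 i, hp.2⟩
  obtain ⟨⟨x, t⟩, ⟨hx, ht⟩, hmax⟩ := (isCompact_orderedTuples.prod isCompact_Icc).exists_isMaxOn
    ⟨(x₁, t₁), hx₁, ht₁⟩ hΦ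
  refine ⟨x, hx, t, ht, pos_of_prod_max_zero_pos ?_, hmax⟩
  have hstart : 0 < Real.exp (-l * t₁) * ∏ i, max (u i (x₁ i) t₁) 0 :=
    mul_pos (Real.exp_pos _) (Finset.prod_pos fun i _ => lt_max_of_lt_left (hpos₁ i))
  exact (mul_pos_iff_of_pos_left (Real.exp_pos _)).1
    (hstart.trans_le (hmax (mk_mem_prod hx₁ ht₁)))

-- The exponential weight makes the product strictly decreasing in time at a spatial maximum, so
-- the maximum over all ordered tuples and all times is attained at the initial time.
theorem exists_strictMono_pos_of_isLocalMax_deriv_le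
    (hcont : ∀ i, ContinuousOn (fun p : ℝ × ℝ => u i p.1 p.2) (Icc α β ×ˢ Icc T0 T1))
    (hderiv : ∀ i, ∀ x ∈ Ioo α β, ∀ t ∈ Ioc T0 T1, 0 < u i x t →
      IsLocalMax (fun y => u i y t) x → ∃ d ≤ C * u i x t, HasDerivAt (u i x) d t)
    (hadj : ∀ i j : Fin n, (i : ℕ) + 1 = j → ∀ x ∈ Icc α β, ∀ t ∈ Icc T0 T1,
      0 < u i x t → u j x t ≤ 0)
    (hα : ∀ i : Fin n, (i : ℕ) = 0 → ∀ t ∈ Icc T0 T1, u i α t ≤ 0)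
    (hβ : ∀ i : Fin n, (i : ℕ) + 1 = n → ∀ t ∈ Icc T0 T1, u i β t ≤ 0)
    {x₁ : Fin n → ℝ} {t₁ : ℝ} (ht₁ : t₁ ∈ Icc T0 T1) (hx₁ : StrictMono x₁)
    (hx₁I : ∀ i, x₁ i ∈ Icc α β) (hpos₁ : ∀ i, 0 < u i (x₁ i) t₁) :
    ∃ x : Fin n → ℝ, StrictMono x ∧ (∀ i, x i ∈ Ioo α β) ∧ ∀ i, 0 < u i (x i) T0 := by
  obtain ⟨x, hx, t, ht, hpos, hmax⟩ := exists_isMaxOn_exp_mul_prod (n * C + 1) hcont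
    ⟨hx₁.monotone, fun i => (hx₁I i).1, fun i => (hx₁I i).2⟩ ht₁ hpos₁
  obtain ⟨hmono, hxI⟩ := strictMono_of_mem_orderedTuples_of_pos (f := fun i y => u i y t) hx hpos
    (fun i j hij y hy => hadj i j hij y hy t ht) (fun i hi => hα i hi t ht)
    (fun i hi => hβ i hi t ht)
  obtain rfl | htT0 := ht.1.eq_or_lt
  · exact ⟨x, hmono, hxI, hpos⟩
  have hspace : IsLocalMax (fun y : Fin n → ℝ => ∏ i, max (u i (y i) t) 0) x := by
    filter_upwards [orderedTuples_mem_nhds hmono hxI] with y hy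
    exact le_of_mul_le_mul_left (hmax (mk_mem_prod hy ht)) (Real.exp_pos _)
  choose d hdC hd using fun i => hderiv i (x i) (hxI i) t ⟨htT0, ht.2⟩ (hpos i)
    (isLocalMax_apply_of_isLocalMax_prod (f := fun i y => u i y t) hspace hpos i)
  obtain ⟨D, hD, hderivD⟩ := exists_hasDerivAt_exp_mul_prod_neg (l := n * C + 1) hd hpos hdC
    (by simp)
  refine absurd (nonneg_of_hasDerivAt_of_eventually_le hderivD ?_) hD.not_ge
  have hnear : ∀ᶠ s in 𝓝 t, ∀ i, 0 < u i (x i) s :=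
    eventually_all.2 fun i => (hd i).continuousAt.eventually (lt_mem_nhds (hpos i))
  filter_upwards [nhdsWithin_le_nhds (lt_mem_nhds htT0), nhdsWithin_le_nhds hnear,
    self_mem_nhdsWithin] with s hsT0 hspos hst
  have hle := hmax (mk_mem_prod hx ⟨hsT0.le, (le_of_lt hst).trans ht.2⟩)
  simpa only [mem_ofPred_eq, prod_max_zero_eq_prod fun i => (hspos i).le,
    prod_max_zero_eq_prod fun i => (hpos i).le] using hle

end OrderedTuples

theorem nonpos_of_parabolic_boundary_nonpos {w : ℝ → ℝ → ℝ} {α β T0 T1 C : ℝ}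
    (hcont : ContinuousOn (fun p : ℝ × ℝ => w p.1 p.2) (Icc α β ×ˢ Icc T0 T1))
    (hderiv : ∀ x ∈ Ioo α β, ∀ t ∈ Ioc T0 T1, 0 < w x t →
      IsLocalMax (fun y => w y t) x → ∃ d ≤ C * w x t, HasDerivAt (w x) d t)
    (hα : ∀ t ∈ Icc T0 T1, w α t ≤ 0) (hβ : ∀ t ∈ Icc T0 T1, w β t ≤ 0)
    (hinit : ∀ x ∈ Ioo α β, w x T0 ≤ 0) {x t : ℝ} (hx : x ∈ Icc α β) (ht : t ∈ Icc T0 T1) :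
    w x t ≤ 0 := by
  by_contra! hpos
  obtain ⟨y, -, hyI, hy⟩ := exists_strictMono_pos_of_isLocalMax_deriv_le
    (u := fun _ : Fin 1 => w) (x₁ := fun _ => x) (fun _ => hcont) (fun _ => hderiv)
    (fun i j hij => by omega) (fun _ _ => hα) (fun _ _ => hβ) ht
    (Subsingleton.strictMono _) (fun _ => hx) (fun _ => hpos)
  exact (hy 0).not_ge (hinit _ (hyI 0))

lemma exists_lt_pos_of_isLocalMax_deriv_le {u w : ℝ → ℝ → ℝ} {α β T0 T1 C x₁ y₁ t₁ : ℝ}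
    (hcontu : ContinuousOn (fun p : ℝ × ℝ => u p.1 p.2) (Icc α β ×ˢ Icc T0 T1))
    (hcontw : ContinuousOn (fun p : ℝ × ℝ => w p.1 p.2) (Icc α β ×ˢ Icc T0 T1))
    (hderivu : ∀ x ∈ Ioo α β, ∀ t ∈ Ioc T0 T1, 0 < u x t →
      IsLocalMax (fun y => u y t) x → ∃ d ≤ C * u x t, HasDerivAt (u x) d t)
    (hderivw : ∀ x ∈ Ioo α β, ∀ t ∈ Ioc T0 T1, 0 < w x t →
      IsLocalMax (fun y => w y t) x → ∃ d ≤ C * w x t, HasDerivAt (w x) d t)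
    (huw : ∀ x ∈ Icc α β, ∀ t ∈ Icc T0 T1, 0 < u x t → w x t ≤ 0)
    (hα : ∀ t ∈ Icc T0 T1, u α t ≤ 0) (hβ : ∀ t ∈ Icc T0 T1, w β t ≤ 0)
    (ht₁ : t₁ ∈ Icc T0 T1) (hx₁ : x₁ ∈ Icc α β) (hy₁ : y₁ ∈ Icc α β) (hxy₁ : x₁ < y₁)
    (hu₁ : 0 < u x₁ t₁) (hw₁ : 0 < w y₁ t₁) :
    ∃ x ∈ Ioo α β, ∃ y ∈ Ioo α β, x < y ∧ 0 < u x T0 ∧ 0 < w y T0 := by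
  obtain ⟨x, hx, hxI, hpos⟩ := exists_strictMono_pos_of_isLocalMax_deriv_le
    (u := ![u, w]) (x₁ := ![x₁, y₁]) (Fin.forall_fin_two.2 ⟨hcontu, hcontw⟩)
    (Fin.forall_fin_two.2 ⟨hderivu, hderivw⟩)
    (by simpa [Fin.forall_fin_two] using huw) (by simpa [Fin.forall_fin_two] using hα)
    (by simpa [Fin.forall_fin_two] using hβ) ht₁
    (by simpa [Fin.strictMono_iff_lt_succ] using hxy₁) (Fin.forall_fin_two.2 ⟨hx₁, hy₁⟩)
    (Fin.forall_fin_two.2 ⟨hu₁, hw₁⟩)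
  exact ⟨x 0, hxI 0, x 1, hxI 1, hx Fin.zero_lt_one, hpos 0, hpos 1⟩

/-! ### Solutions off their critical points -/

/-- The function `u` satisfies the linear parabolic equation `u_t = u_xx + B u_x + c u` at the
point `(x, t)`, and is regular enough there for the equation to be meaningful. -/
def SolvesAt (B c u : ℝ → ℝ → ℝ) (x t : ℝ) : Prop :=
  ContDiffAt ℝ 2 (fun y => u y t) x ∧
    HasDerivAt (u x) (deriv (deriv fun y => u y t) x + B x t * deriv (fun y => u y t) x
      + c x t * u x t) t

/-- A continuous function `u` on `[α, β] × [T0, T1]` which satisfies `u_t = u_xx + B u_x + c u`,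
with coefficients bounded by `M`, except possibly at its spatial critical points. Unlike the class
of solutions, this class contains the positive part of a solution all of whose zeros are
degenerate. -/
structure SolvesOffCritical (B c u : ℝ → ℝ → ℝ) (M α β T0 T1 : ℝ) : Prop where
  continuousOn : ContinuousOn (fun p : ℝ × ℝ => u p.1 p.2) (Icc α β ×ˢ Icc T0 T1)
  abs_drift_le : ∀ x ∈ Ioo α β, ∀ t ∈ Ioc T0 T1, |B x t| ≤ M
  abs_potential_le : ∀ x ∈ Ioo α β, ∀ t ∈ Ioc T0 T1, |c x t| ≤ M
  critical_or_solvesAt : ∀ x ∈ Ioo α β, ∀ t ∈ Ioc T0 T1,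
    HasDerivAt (fun y => u y t) 0 x ∨ SolvesAt B c u x t

section Comparison

variable {B c u φ : ℝ → ℝ → ℝ} {φ' : ℝ → ℝ} {φ'' φt M x t : ℝ}

lemma SolvesAt.const_mul (h : SolvesAt B c u x t) (a : ℝ) :
    SolvesAt B c (fun x t => a * u x t) x t := by
  refine ⟨contDiffAt_const.mul h.1, (h.2.const_mul a).congr_deriv ?_⟩
  have hderiv : deriv (fun y => a * u y t) = fun y => a * deriv (fun y => u y t) y :=
    funext fun y => deriv_const_mul_field a
  rw [hderiv, deriv_const_mul_field]
  ring

lemma SolvesAt.exists_hasDerivAt_sub_le (hu : SolvesAt B c u x t)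
    (hφ : ∀ᶠ y in 𝓝 x, HasDerivAt (fun y => φ y t) (φ' y) y) (hφ' : HasDerivAt φ' φ'' x)
    (hφt : HasDerivAt (φ x) φt t) (hsuper : φ'' + B x t * φ' x + c x t * φ x t ≤ φt)
    (hc : c x t ≤ M) (hpos : 0 < u x t - φ x t) (hmax : IsLocalMax (fun y => u y t - φ y t) x) :
    ∃ d ≤ M * (u x t - φ x t), HasDerivAt (fun s => u x s - φ x s) d t := by
  refine ⟨_, ?_, hu.2.sub hφt⟩
  have hdiff : ∀ᶠ y in 𝓝 x, DifferentiableAt ℝ (fun y => u y t) y := by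
    filter_upwards [hu.1.eventually (by simp)] with y hy using hy.differentiableAt (by simp)
  have hdiff' : DifferentiableAt ℝ (deriv fun y => u y t) x :=
    (hu.1.derivWithin (m := 1) (by norm_num)).differentiableAt (by simp)
  have hderiv :
      deriv (fun y => u y t - φ y t) =ᶠ[𝓝 x] fun y => deriv (fun y => u y t) y - φ' y := by
    filter_upwards [hdiff, hφ] with y hy hφy using (hy.hasDerivAt.sub hφy).deriv
  have hfirst : deriv (fun y => u y t) x = φ' x :=
    sub_eq_zero.1 (hderiv.self_of_nhds.symm.trans hmax.deriv_eq_zero)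
  have hsecond : deriv (deriv fun y => u y t) x ≤ φ'' := by
    have h := deriv_deriv_nonpos_of_isLocalMax hmax
      (hu.1.continuousAt.sub hφ.self_of_nhds.continuousAt)
    rw [hderiv.deriv_eq, (hdiff'.hasDerivAt.fun_sub hφ').deriv] at h
    exact sub_nonpos.1 h
  have hpotential : c x t * (u x t - φ x t) ≤ M * (u x t - φ x t) :=
    mul_le_mul_of_nonneg_right hc hpos.le
  rw [hfirst]
  linarith

lemma exists_hasDerivAt_sub_le_of_noncritical
    (hu : HasDerivAt (fun y => u y t) 0 x ∨ SolvesAt B c u x t)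
    (hφ : ∀ᶠ y in 𝓝 x, HasDerivAt (fun y => φ y t) (φ' y) y) (hφ' : HasDerivAt φ' φ'' x)
    (hφt : HasDerivAt (φ x) φt t) (hsuper : φ'' + B x t * φ' x + c x t * φ x t ≤ φt)
    (hc : c x t ≤ M) (hpos : 0 < u x t - φ x t) (hmax : IsLocalMax (fun y => u y t - φ y t) x)
    (hne : φ' x ≠ 0) :
    ∃ d ≤ M * (u x t - φ x t), HasDerivAt (fun s => u x s - φ x s) d t := by
  rcases hu with hcrit | hu
  · have hzero := hmax.hasDerivAt_eq_zero (hcrit.sub hφ.self_of_nhds)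
    exact absurd (by simpa using hzero) hne
  · exact hu.exists_hasDerivAt_sub_le hφ hφ' hφt hsuper hc hpos hmax

end Comparison

namespace SolvesOffCritical

variable {B c u : ℝ → ℝ → ℝ} {M α β T0 T1 : ℝ}

lemma mono (h : SolvesOffCritical B c u M α β T0 T1) {α' β' T0' T1' : ℝ} (hα : α ≤ α')
    (hβ : β' ≤ β) (hT0 : T0 ≤ T0') (hT1 : T1' ≤ T1) :
    SolvesOffCritical B c u M α' β' T0' T1' where
  continuousOn := h.continuousOn.mono (prod_mono (Icc_subset_Icc hα hβ) (Icc_subset_Icc hT0 hT1))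
  abs_drift_le x hx t ht :=
    h.abs_drift_le x (Ioo_subset_Ioo hα hβ hx) t (Ioc_subset_Ioc hT0 hT1 ht)
  abs_potential_le x hx t ht :=
    h.abs_potential_le x (Ioo_subset_Ioo hα hβ hx) t (Ioc_subset_Ioc hT0 hT1 ht)
  critical_or_solvesAt x hx t ht :=
    h.critical_or_solvesAt x (Ioo_subset_Ioo hα hβ hx) t (Ioc_subset_Ioc hT0 hT1 ht)

lemma const_mul (h : SolvesOffCritical B c u M α β T0 T1) (a : ℝ) :
    SolvesOffCritical B c (fun x t => a * u x t) M α β T0 T1 where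
  continuousOn := continuousOn_const.mul h.continuousOn
  abs_drift_le := h.abs_drift_le
  abs_potential_le := h.abs_potential_le
  critical_or_solvesAt x hx t ht :=
    (h.critical_or_solvesAt x hx t ht).imp (fun hd => by simpa using hd.const_mul a)
      fun hs => hs.const_mul a

lemma continuousOn_time (h : SolvesOffCritical B c u M α β T0 T1) {x : ℝ} (hx : x ∈ Icc α β) :
    ContinuousOn (u x) (Icc T0 T1) :=
  h.continuousOn.comp (f := fun t => (x, t)) (by fun_prop) fun _ ht => ⟨hx, ht⟩

lemma continuousOn_space (h : SolvesOffCritical B c u M α β T0 T1) {t : ℝ} (ht : t ∈ Icc T0 T1) :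
    ContinuousOn (fun x => u x t) (Icc α β) :=
  h.continuousOn.comp (f := fun x => (x, t)) (by fun_prop) fun _ hx => ⟨hx, ht⟩

lemma solvesAt_of_not_critical (h : SolvesOffCritical B c u M α β T0 T1) {x t : ℝ}
    (hx : x ∈ Ioo α β) (ht : t ∈ Ioc T0 T1) (hcrit : ¬HasDerivAt (fun y => u y t) 0 x) :
    SolvesAt B c u x t :=
  (h.critical_or_solvesAt x hx t ht).resolve_left hcrit

end SolvesOffCritical

lemma exists_forall_Icc_lt_of_continuousOn {g : ℝ → ℝ} {a T0 T1 : ℝ} (hT : T0 < T1)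
    (hg : ContinuousOn g (Icc T0 T1)) (ha : a < g T1) :
    ∃ S ∈ Ico T0 T1, ∀ t ∈ Icc S T1, a < g t := by
  have hnear : ∀ᶠ t in 𝓝[≤] T1, a < g t := by
    rw [← nhdsWithin_Icc_eq_nhdsLE hT]
    exact (hg T1 ⟨hT.le, le_rfl⟩).eventually (lt_mem_nhds ha)
  obtain ⟨l, hl, hsub⟩ := mem_nhdsLE_iff_exists_Icc_subset.1 hnear
  exact ⟨max T0 l, ⟨le_max_left _ _, max_lt hT hl⟩, fun t ht =>
    hsub ⟨(le_max_right _ _).trans ht.1, ht.2⟩⟩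

/-! ### Strong positivity -/

/-- The travelling front `exp (a (x - f) + b (t - s)) - 1`: for `a` large compared to `b` it is a
strict subsolution, used as a barrier from below. -/
noncomputable def front (a b f s x t : ℝ) : ℝ :=
  Real.exp (a * (x - f) + b * (t - s)) - 1

section Front

variable {a b f s M : ℝ}

lemma hasDerivAt_front_space (a b f s t x : ℝ) :
    HasDerivAt (fun y => front a b f s y t) (a * (front a b f s x t + 1)) x := by
  have h : HasDerivAt (fun y => a * (y - f) + b * (t - s)) a x := by
    simpa using (((hasDerivAt_id x).sub_const f).const_mul a).add_const (b * (t - s))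
  exact (h.exp.sub_const 1).congr_deriv (by rw [front]; ring)

lemma hasDerivAt_front_time (a b f s x t : ℝ) :
    HasDerivAt (front a b f s x) (b * (front a b f s x t + 1)) t := by
  have h : HasDerivAt (fun r => a * (x - f) + b * (r - s)) b t := by
    simpa using (((hasDerivAt_id t).sub_const s).const_mul b).const_add (a * (x - f))
  exact (h.exp.sub_const 1).congr_deriv (by rw [front]; ring)

lemma front_subsolution {B c E : ℝ} (hE : 1 ≤ E) (hB : |B| ≤ M) (hc : |c| ≤ M)
    (hab : b + M * |a| + M ≤ a ^ 2) :
    b * E ≤ a ^ 2 * E + B * (a * E) + c * (E - 1) := by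
  have hE0 : 0 ≤ E := zero_le_one.trans hE
  have hdrift : -(M * |a|) * E ≤ B * (a * E) := by
    have h : |B * a| ≤ M * |a| := by
      rw [abs_mul]; exact mul_le_mul_of_nonneg_right hB (abs_nonneg a)
    calc -(M * |a|) * E ≤ B * a * E := mul_le_mul_of_nonneg_right (neg_le_of_abs_le h) hE0
      _ = B * (a * E) := mul_assoc _ _ _
  have hpotential : -M * E ≤ c * (E - 1) :=
    calc -M * E ≤ -M * (E - 1) := by linarith [(abs_nonneg c).trans hc]
      _ ≤ c * (E - 1) := mul_le_mul_of_nonneg_right (neg_le_of_abs_le hc) (by linarith)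
  have hcoeff : (b + M * |a| + M) * E ≤ a ^ 2 * E := mul_le_mul_of_nonneg_right hab hE0
  linarith

lemma exists_hasDerivAt_front_sub_le {B c u : ℝ → ℝ → ℝ} {x t ε : ℝ}
    (hu : HasDerivAt (fun y => u y t) 0 x ∨ SolvesAt B c u x t) (hB : |B x t| ≤ M)
    (hc : |c x t| ≤ M) (ha : a ≠ 0) (hab : b + M * |a| + M ≤ a ^ 2) (hε : 0 < ε)
    (hunonneg : 0 ≤ u x t) (hpos : 0 < ε * front a b f s x t - u x t)
    (hmax : IsLocalMax (fun y => ε * front a b f s y t - u y t) x) :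
    ∃ d ≤ M * (ε * front a b f s x t - u x t),
      HasDerivAt (fun r => ε * front a b f s x r - u x r) d t := by
  have hE : 0 < front a b f s x t + 1 := by rw [front, sub_add_cancel]; exact Real.exp_pos _
  have hfront : 0 < front a b f s x t := (pos_iff_pos_of_mul_pos (by linarith)).1 hε
  have hneg : HasDerivAt (fun y => -1 * u y t) 0 x ∨ SolvesAt B c (fun x t => -1 * u x t) x t :=
    hu.imp (fun h => by simpa using h.const_mul (-1)) fun h => h.const_mul (-1)
  have hsecond : HasDerivAt (fun y => -ε * (a * (front a b f s y t + 1)))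
      (-ε * (a * (a * (front a b f s x t + 1)))) x :=
    (((hasDerivAt_front_space a b f s t x).add_const 1).const_mul a).const_mul (-ε)
  have hsub := front_subsolution (by linarith : 1 ≤ front a b f s x t + 1) hB hc hab
  have hswap (y r : ℝ) : -1 * u y r - -ε * front a b f s y r = ε * front a b f s y r - u y r := by
    ring
  simp only [← hswap] at hpos hmax ⊢
  refine exists_hasDerivAt_sub_le_of_noncritical (u := fun y r => -1 * u y r)
    (φ := fun y r => -ε * front a b f s y r) hneg
    (Eventually.of_forall fun y => (hasDerivAt_front_space a b f s t y).const_mul (-ε)) hsecond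
    ((hasDerivAt_front_time a b f s x t).const_mul (-ε)) ?_ ((le_abs_self _).trans hc) hpos hmax
    (mul_ne_zero (neg_ne_zero.2 hε.ne') (mul_ne_zero ha hE.ne'))
  nlinarith [mul_le_mul_of_nonneg_left hsub hε.le]

lemma exists_one_le_add_mul_le_sq {k : ℝ} (hk : k ≠ 0) (κ M : ℝ) (hκ : 0 ≤ κ) (hM : 0 ≤ M) :
    ∃ A ≥ 1, A * κ + M * |A * k| + M ≤ (A * k) ^ 2 := by
  have hk2 : 0 < k ^ 2 := by positivity
  set A : ℝ := 1 + (κ + M * |k| + M) / k ^ 2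
  have hA : 1 ≤ A := le_add_of_nonneg_right (by positivity)
  refine ⟨A, hA, ?_⟩
  have hAk : A * k ^ 2 = k ^ 2 + (κ + M * |k| + M) := by
    rw [add_mul, one_mul, div_mul_cancel₀ _ hk2.ne']
  calc A * κ + M * |A * k| + M = A * (κ + M * |k|) + M := by
        rw [abs_mul, abs_of_nonneg (by linarith : 0 ≤ A)]; ring
    _ ≤ A * (κ + M * |k| + M) := by nlinarith
    _ ≤ A * (A * k ^ 2) := by
        rw [hAk]; exact mul_le_mul_of_nonneg_left (by linarith) (by linarith)
    _ = (A * k) ^ 2 := by ring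

end Front

lemma sub_div_sub_mem_Icc {e f x : ℝ} (hne : e ≠ f) (hx : x ∈ uIcc e f) :
    (x - f) / (e - f) ∈ Icc (0 : ℝ) 1 := by
  rcases lt_or_gt_of_ne hne with h | h
  · rw [uIcc_of_lt h] at hx
    exact ⟨div_nonneg_of_nonpos (by linarith [hx.2]) (by linarith),
      (div_le_one_of_neg (by linarith)).2 (by linarith [hx.1])⟩
  · rw [uIcc_of_gt h] at hx
    exact ⟨div_nonneg (by linarith [hx.1]) (by linarith),
      (div_le_one (by linarith)).2 (by linarith [hx.2])⟩

lemma sub_div_sub_pos {e f x : ℝ} (hx : x ∈ uIoo e f) : 0 < (x - f) / (e - f) := by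
  rcases lt_trichotomy e f with h | rfl | h
  · rw [uIoo_of_lt h] at hx
    exact div_pos_of_neg_of_neg (by linarith [hx.2]) (by linarith)
  · simp at hx
  · rw [uIoo_of_gt h] at hx
    exact div_pos (by linarith [hx.1]) (by linarith)

lemma exists_front_barrier {e f S T M η : ℝ} (hne : e ≠ f) (hST : S < T) (hM : 0 ≤ M)
    (hη : 0 < η) :
    ∃ ε > 0, ∃ a ≠ 0, ∃ b, b + M * |a| + M ≤ a ^ 2 ∧
      (∀ t ≤ T, ε * front a b f T e t ≤ η) ∧ (∀ t ≤ T, ε * front a b f T f t ≤ 0) ∧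
      (∀ x ∈ uIcc e f, ε * front a b f T x S ≤ 0) ∧ ∀ x ∈ uIoo e f, 0 < ε * front a b f T x T := by
  have hef : e - f ≠ 0 := sub_ne_zero.2 hne
  have hTS : 0 < T - S := sub_pos.2 hST
  obtain ⟨A, hA, hsq⟩ :=
    exists_one_le_add_mul_le_sq (one_div_ne_zero hef) (1 / (T - S)) M (by positivity) hM
  have hA0 : 0 < A := by linarith
  have hfront (x t : ℝ) : front (A * (1 / (e - f))) (A * (1 / (T - S))) f T x t =
      Real.exp (A * ((x - f) / (e - f) - (T - t) / (T - S))) - 1 := by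
    rw [front]; ring_nf
  have hfront_nonpos {x t : ℝ} (h : (x - f) / (e - f) ≤ (T - t) / (T - S)) :
      front (A * (1 / (e - f))) (A * (1 / (T - S))) f T x t ≤ 0 := by
    rw [hfront, sub_nonpos, Real.exp_le_one_iff]
    exact mul_nonpos_of_nonneg_of_nonpos hA0.le (sub_nonpos.2 h)
  have hε : 0 < η / Real.exp A := by positivity
  refine ⟨η / Real.exp A, hε, A * (1 / (e - f)), mul_ne_zero hA0.ne' (one_div_ne_zero hef),
    A * (1 / (T - S)), hsq, fun t ht => ?_, fun t ht => ?_, fun x hx => ?_, fun x hx => ?_⟩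
  · have hexp : Real.exp (A * (1 - (T - t) / (T - S))) ≤ Real.exp A :=
      Real.exp_le_exp.2 (mul_le_of_le_one_right hA0.le
        (sub_le_self _ (div_nonneg (sub_nonneg.2 ht) hTS.le)))
    calc η / Real.exp A * front (A * (1 / (e - f))) (A * (1 / (T - S))) f T e t
        ≤ η / Real.exp A * Real.exp A := by
          refine mul_le_mul_of_nonneg_left ?_ hε.le
          rw [hfront, div_self hef]
          linarith
      _ = η := div_mul_cancel₀ _ (Real.exp_pos _).ne'
  · refine mul_nonpos_of_nonneg_of_nonpos hε.le (hfront_nonpos ?_)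
    rw [sub_self, zero_div]
    exact div_nonneg (sub_nonneg.2 ht) hTS.le
  · refine mul_nonpos_of_nonneg_of_nonpos hε.le (hfront_nonpos ?_)
    rw [div_self hTS.ne']
    exact (sub_div_sub_mem_Icc hne hx).2
  · rw [hfront, sub_self, zero_div, sub_zero]
    exact mul_pos hε (sub_pos.2 (Real.one_lt_exp_iff.2 (mul_pos hA0 (sub_div_sub_pos hx))))

theorem SolvesOffCritical.pos_of_endpoint_pos {B c u : ℝ → ℝ → ℝ} {M T0 T1 e f z : ℝ}
    (h : SolvesOffCritical B c u M (min e f) (max e f) T0 T1) (hT : T0 < T1) (hz : z ∈ uIoo e f)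
    (hnonneg : ∀ t ∈ Icc T0 T1, 0 < u e t → ∀ x ∈ uIcc e f, 0 ≤ u x t) (he : 0 < u e T1) :
    0 < u z T1 := by
  have hne : e ≠ f := by rintro rfl; simp at hz
  have hM : 0 ≤ M := (abs_nonneg _).trans (h.abs_drift_le z hz T1 ⟨hT, le_rfl⟩)
  obtain ⟨S, ⟨hTS, hST⟩, hS⟩ := exists_forall_Icc_lt_of_continuousOn hT
    (h.continuousOn_time left_mem_uIcc) (half_lt_self he)
  obtain ⟨ε, hε, a, ha, b, hab, hψe, hψf, hψS, hψT⟩ :=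
    exists_front_barrier hne hST hM (half_pos he)
  have hunonneg {t : ℝ} (ht : t ∈ Icc S T1) {x : ℝ} (hx : x ∈ uIcc e f) : 0 ≤ u x t :=
    hnonneg t ⟨hTS.trans ht.1, ht.2⟩ ((half_pos he).trans (hS t ht)) x hx
  have hwe : ∀ t ∈ Icc S T1, ε * front a b f T1 e t - u e t ≤ 0 := fun t ht =>
    sub_nonpos.2 ((hψe t ht.2).trans (hS t ht).le)
  have hwf : ∀ t ∈ Icc S T1, ε * front a b f T1 f t - u f t ≤ 0 := fun t ht =>
    sub_nonpos.2 ((hψf t ht.2).trans (hunonneg ht right_mem_uIcc))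
  have h' := h.mono le_rfl le_rfl hTS le_rfl
  refine (hψT z hz).trans_le (sub_nonpos.1 ?_)
  refine nonpos_of_parabolic_boundary_nonpos (w := fun x t => ε * front a b f T1 x t - u x t)
    (α := min e f) (β := max e f) (C := M) ?_ (fun x hx t ht hpos hmax => ?_) ?_ ?_
    (fun x hx => ?_) (Ioo_subset_Icc_self hz) ⟨hST.le, le_rfl⟩
  · exact ContinuousOn.sub (by unfold front; fun_prop) h'.continuousOn
  · exact exists_hasDerivAt_front_sub_le (h'.critical_or_solvesAt x hx t ht)
      (h'.abs_drift_le x hx t ht) (h'.abs_potential_le x hx t ht) ha hab hε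
      (hunonneg (Ioc_subset_Icc_self ht) (Ioo_subset_Icc_self hx)) hpos hmax
  · rcases min_choice e f with hmin | hmin <;> rwa [hmin]
  · rcases max_choice e f with hmax | hmax <;> rwa [hmax]
  · exact sub_nonpos.2 ((hψS x (Ioo_subset_Icc_self hx)).trans
      (hunonneg ⟨le_rfl, hST.le⟩ (Ioo_subset_Icc_self hx)))

/-! ### Nondegenerate zeros -/

lemma hasDerivAt_max_zero_of_eq_zero {f : ℝ → ℝ} {x : ℝ} (hf : HasDerivAt f 0 x) (hx : f x = 0) :
    HasDerivAt (fun y => max (f y) 0) 0 x := by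
  rw [hasDerivAt_iff_isLittleO] at hf ⊢
  refine (Asymptotics.IsBigO.of_bound 1 (Eventually.of_forall fun y => ?_)).trans_isLittleO hf
  simpa [hx] using abs_max_le_max_abs_abs (a := f y) (b := 0)

lemma SolvesAt.congr {B c u w : ℝ → ℝ → ℝ} {x t : ℝ} (hu : SolvesAt B c u x t)
    (hspace : (fun y => w y t) =ᶠ[𝓝 x] fun y => u y t) (htime : w x =ᶠ[𝓝 t] u x) :
    SolvesAt B c w x t := by
  refine ⟨hu.1.congr_of_eventuallyEq hspace, ?_⟩
  rw [hspace.deriv_eq, hspace.deriv.deriv_eq, htime.eq_of_nhds]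
  exact hu.2.congr_of_eventuallyEq htime

lemma critical_or_solvesAt_max_zero {B c u : ℝ → ℝ → ℝ} {x t : ℝ}
    (hu : HasDerivAt (fun y => u y t) 0 x ∨ SolvesAt B c u x t)
    (hdegenerate : u x t = 0 → HasDerivAt (fun y => u y t) 0 x) :
    HasDerivAt (fun y => max (u y t) 0) 0 x ∨ SolvesAt B c (fun x t => max (u x t) 0) x t := by
  have hcont : ContinuousAt (fun y => u y t) x :=
    hu.elim (fun h => h.continuousAt) fun h => h.1.continuousAt
  rcases lt_trichotomy (u x t) 0 with hneg | hzero | hpos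
  · have hlocal : (fun y => max (u y t) 0) =ᶠ[𝓝 x] fun _ => 0 := by
      filter_upwards [hcont.eventually (gt_mem_nhds hneg)] with y hy
        using max_eq_right (le_of_lt hy)
    exact Or.inl ((hasDerivAt_const x 0).congr_of_eventuallyEq hlocal)
  · exact Or.inl (hasDerivAt_max_zero_of_eq_zero (hdegenerate hzero) hzero)
  · have hspace : (fun y => max (u y t) 0) =ᶠ[𝓝 x] fun y => u y t := by
      filter_upwards [hcont.eventually (lt_mem_nhds hpos)] with y hy using max_eq_left (le_of_lt hy)
    refine hu.imp (fun h => h.congr_of_eventuallyEq hspace) fun h => h.congr hspace ?_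
    filter_upwards [h.2.continuousAt.eventually (lt_mem_nhds hpos)] with s hs
      using max_eq_left (le_of_lt hs)

namespace SolvesOffCritical

variable {B c u : ℝ → ℝ → ℝ} {M α β T0 T1 : ℝ}

lemma max_zero (h : SolvesOffCritical B c u M α β T0 T1)
    (hdegenerate : ∀ x ∈ Ioo α β, ∀ t ∈ Ioc T0 T1, u x t = 0 → HasDerivAt (fun y => u y t) 0 x) :
    SolvesOffCritical B c (fun x t => max (u x t) 0) M α β T0 T1 where
  continuousOn := h.continuousOn.sup continuousOn_const
  abs_drift_le := h.abs_drift_le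
  abs_potential_le := h.abs_potential_le
  critical_or_solvesAt x hx t ht :=
    critical_or_solvesAt_max_zero (h.critical_or_solvesAt x hx t ht) (hdegenerate x hx t ht)

-- If all zeros were degenerate, strong positivity would apply to the positive part of `u` and
-- spread the positive sign from `α` up to `β`.
theorem exists_nondegenerate_zero (h : SolvesOffCritical B c u M α β T0 T1) (hT : T0 < T1)
    (hαβ : α < β) (hα : 0 < u α T1) (hβ : u β T1 < 0) :
    ∃ s ∈ Ioc T0 T1, ∃ ξ ∈ Ioo α β, u ξ s = 0 ∧ ¬HasDerivAt (fun y => u y s) 0 ξ := by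
  by_contra! hdegenerate
  obtain ⟨p, ⟨hαp, hpβ⟩, hp⟩ := exists_forall_Icc_lt_of_continuousOn (a := 0) hαβ
    (h.continuousOn_space ⟨hT.le, le_rfl⟩).neg (neg_pos.2 hβ)
  obtain ⟨z, hpz, hzβ⟩ := exists_between hpβ
  have hneg : u z T1 < 0 := neg_pos.1 (hp z ⟨hpz.le, hzβ.le⟩)
  have hmax : SolvesOffCritical B c (fun x t => max (u x t) 0) M (min α β) (max α β) T0 T1 := by
    rw [min_eq_left hαβ.le, max_eq_right hαβ.le]
    exact h.max_zero fun x hx t ht => hdegenerate t ht x hx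
  have hz : z ∈ uIoo α β := by rw [uIoo_of_lt hαβ]; exact ⟨hαp.trans_lt hpz, hzβ⟩
  have hpos : 0 < max (u z T1) 0 := hmax.pos_of_endpoint_pos hT hz
    (fun _ _ _ _ _ => le_max_right _ _) (lt_max_of_lt_left hα)
  exact hpos.ne' (max_eq_right hneg.le)

end SolvesOffCritical

/-! ### Functions with a single sign change -/

/-- On every time slice `u` goes from positive at `α` to negative at `β` and never becomes positive
again after having been negative. -/
structure HasSingleSignChange (B c u : ℝ → ℝ → ℝ) (M α β T0 T1 : ℝ) : Prop
    extends SolvesOffCritical B c u M α β T0 T1 where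
  pos_left : ∀ t ∈ Icc T0 T1, 0 < u α t
  neg_right : ∀ t ∈ Icc T0 T1, u β t < 0
  nonpos_of_neg : ∀ t ∈ Icc T0 T1, ∀ y ∈ Icc α β, ∀ z ∈ Icc α β, y < z → u y t < 0 → u z t ≤ 0

namespace HasSingleSignChange

variable {B c u : ℝ → ℝ → ℝ} {M α β T0 T1 t x y ξ : ℝ}

lemma pos_of_lt (h : HasSingleSignChange B c u M α β T0 T1) (ht : t ∈ Ioc T0 T1)
    (hx : x ∈ Icc α β) (hy : y ∈ Icc α β) (hxy : x < y) (hpos : 0 < u y t) : 0 < u x t := by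
  obtain rfl | hαx := hx.1.eq_or_lt
  · exact h.pos_left t (Ioc_subset_Icc_self ht)
  have hyα : α < y := hαx.trans hxy
  have hsub : SolvesOffCritical B c u M (min y α) (max y α) T0 t := by
    rw [min_eq_right hyα.le, max_eq_left hyα.le]
    exact h.mono le_rfl hy.2 le_rfl ht.2
  refine hsub.pos_of_endpoint_pos ht.1 (by rw [uIoo_of_gt hyα]; exact ⟨hαx, hxy⟩)
    (fun s hs hys z hz => ?_) hpos
  rw [uIcc_of_gt hyα] at hz
  by_contra! hneg
  have hzy : z < y := hz.2.lt_of_ne (by rintro rfl; exact hys.not_gt hneg)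
  exact hys.not_ge
    (h.nonpos_of_neg s ⟨hs.1, hs.2.trans ht.2⟩ z ⟨hz.1, hz.2.trans hy.2⟩ y hy hzy hneg)

lemma neg_of_lt (h : HasSingleSignChange B c u M α β T0 T1) (ht : t ∈ Ioc T0 T1)
    (hx : x ∈ Icc α β) (hy : y ∈ Icc α β) (hxy : x < y) (hneg : u x t < 0) : u y t < 0 := by
  obtain rfl | hyβ := hy.2.eq_or_lt
  · exact h.neg_right t (Ioc_subset_Icc_self ht)
  have hxβ : x < β := hxy.trans hyβ
  have hsub : SolvesOffCritical B c (fun x t => -1 * u x t) M (min x β) (max x β) T0 t := by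
    rw [min_eq_left hxβ.le, max_eq_right hxβ.le]
    exact (h.mono hx.1 le_rfl le_rfl ht.2).const_mul (-1)
  have hflip : 0 < -1 * u y t := by
    refine hsub.pos_of_endpoint_pos ht.1 (by rw [uIoo_of_lt hxβ]; exact ⟨hxy, hyβ⟩)
      (fun s hs hxs z hz => ?_) (by linarith)
    rw [uIcc_of_lt hxβ] at hz
    obtain rfl | hxz := hz.1.eq_or_lt
    · exact hxs.le
    · linarith [h.nonpos_of_neg s ⟨hs.1, hs.2.trans ht.2⟩ x hx z ⟨hx.1.trans hz.1, hz.2⟩ hxz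
        (by linarith)]
  linarith

lemma pos_of_lt_nondegenerate_zero (h : HasSingleSignChange B c u M α β T0 T1)
    (ht : t ∈ Ioc T0 T1) (hξ : ξ ∈ Ioo α β) (hzero : u ξ t = 0) {u' : ℝ}
    (hderiv : HasDerivAt (fun y => u y t) u' ξ) (hu' : u' ≠ 0) (hx : x ∈ Icc α β) (hxξ : x < ξ) :
    0 < u x t := by
  have hne : ∀ᶠ y in 𝓝[<] ξ, u y t ≠ 0 :=
    (hderiv.eventually_ne hu').filter_mono (nhdsLT_le_nhdsNE ξ)
  obtain ⟨y, hy, hxy, hyξ⟩ := (hne.and (Ioo_mem_nhdsLT hxξ)).exists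
  have hyI : y ∈ Icc α β := ⟨hx.1.trans hxy.le, hyξ.le.trans hξ.2.le⟩
  rcases hy.lt_or_gt with hneg | hpos
  · exact absurd hzero (h.neg_of_lt ht hyI (Ioo_subset_Icc_self hξ) hyξ hneg).ne
  · exact h.pos_of_lt ht hx hyI hxy hpos

lemma neg_of_gt_nondegenerate_zero (h : HasSingleSignChange B c u M α β T0 T1)
    (ht : t ∈ Ioc T0 T1) (hξ : ξ ∈ Ioo α β) (hzero : u ξ t = 0) {u' : ℝ}
    (hderiv : HasDerivAt (fun y => u y t) u' ξ) (hu' : u' ≠ 0) (hx : x ∈ Icc α β) (hξx : ξ < x) :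
    u x t < 0 := by
  have hne : ∀ᶠ y in 𝓝[>] ξ, u y t ≠ 0 :=
    (hderiv.eventually_ne hu').filter_mono (nhdsGT_le_nhdsNE ξ)
  obtain ⟨y, hy, hξy, hyx⟩ := (hne.and (Ioo_mem_nhdsGT hξx)).exists
  have hyI : y ∈ Icc α β := ⟨hξ.1.le.trans hξy.le, hyx.le.trans hx.2⟩
  rcases hy.lt_or_gt with hneg | hpos
  · exact h.neg_of_lt ht hyI hx hyx hneg
  · exact absurd hzero (h.pos_of_lt ht (Ioo_subset_Icc_self hξ) hyI hξy hpos).ne'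

lemma deriv_neg_of_nondegenerate_zero (h : HasSingleSignChange B c u M α β T0 T1)
    (ht : t ∈ Ioc T0 T1) (hξ : ξ ∈ Ioo α β) (hzero : u ξ t = 0) {u' : ℝ}
    (hderiv : HasDerivAt (fun y => u y t) u' ξ) (hu' : u' ≠ 0) : u' < 0 := by
  refine lt_of_le_of_ne (neg_nonneg.1 ?_) hu'
  refine nonneg_of_hasDerivAt_of_eventually_le hderiv.neg ?_
  filter_upwards [Ioo_mem_nhdsLT hξ.1] with x hx
  have hpos := h.pos_of_lt_nondegenerate_zero ht hξ hzero hderiv hu'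
    ⟨hx.1.le, hx.2.le.trans hξ.2.le⟩ hx.2
  simpa [hzero] using hpos.le

end HasSingleSignChange

lemma exists_forall_sub_le_of_hasStrictDerivAt {f : ℝ → ℝ} {f' ξ : ℝ}
    (hf : HasStrictDerivAt f f' ξ) (hf' : f' < 0) :
    ∃ d > 0, ∀ x ∈ Ioo (ξ - d) (ξ + d), ∀ y ∈ Ioo (ξ - d) (ξ + d), x < y →
      f y - f x ≤ f' / 2 * (y - x) := by
  have hbound := hf.isLittleO.def (c := -f' / 2) (by linarith)
  rw [nhds_prod_eq] at hbound
  obtain ⟨s, hs, hbound⟩ := mem_prod_self_iff.1 hbound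
  obtain ⟨d, hd, hball⟩ := Metric.mem_nhds_iff.1 hs
  rw [Real.ball_eq_Ioo] at hball
  refine ⟨d, hd, fun x hx y hy hxy => ?_⟩
  have h := hbound (mk_mem_prod (hball hy) (hball hx))
  simp only [mem_ofPred_eq, ContinuousLinearMap.toSpanSingleton_apply, smul_eq_mul,
    Real.norm_eq_abs, abs_of_pos (sub_pos.2 hxy)] at h
  linarith [le_of_abs_le h]

lemma eventually_mul_lt (a : ℝ) {b : ℝ} (hb : 0 < b) : ∀ᶠ ε in 𝓝[>] (0 : ℝ), ε * a < b := by
  have h : Tendsto (fun ε : ℝ => ε * a) (𝓝 0) (𝓝 0) := by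
    simpa using (continuous_mul_const a).tendsto 0
  exact (h.mono_left nhdsWithin_le_nhds).eventually (gt_mem_nhds hb)

open scoped NNReal in
lemma eventually_forall_le_mul_of_lt_mul {f w : ℝ → ℝ} {α β ξ f' : ℝ} {D : ℝ≥0}
    (hξ : ξ ∈ Ioo α β) (hf : ContinuousOn f (Icc α β))
    (hpos : ∀ x ∈ Icc α β, x < ξ → 0 < f x) (hneg : ∀ x ∈ Icc α β, ξ < x → f x < 0)
    (hderiv : HasStrictDerivAt f f' ξ) (hf' : f' < 0) (hw : LipschitzOnWith D w (Icc α β)) :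
    ∀ᶠ ε in 𝓝[>] (0 : ℝ), ∀ x ∈ Icc α β, ∀ y ∈ Icc α β, x < y → f x < ε * w x →
      f y ≤ ε * w y := by
  obtain ⟨N, hN⟩ := isCompact_Icc.exists_bound_of_continuousOn hw.continuousOn
  obtain ⟨d, hd, hslope⟩ := exists_forall_sub_le_of_hasStrictDerivAt hderiv hf'
  obtain ⟨ν₁, hν₁, hleft⟩ := (isCompact_Icc (a := α) (b := ξ - d)).exists_forall_le' (f := f)
    (hf.mono (Icc_subset_Icc_right (by linarith [hξ.2]))) (a := 0)
    fun x hx => hpos x ⟨hx.1, by linarith [hx.2, hξ.2]⟩ (by linarith [hx.2])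
  obtain ⟨ν₂, hν₂, hright⟩ := (isCompact_Icc (a := ξ + d) (b := β)).exists_forall_le'
    (f := fun x => -f x) (hf.neg.mono (Icc_subset_Icc_left (by linarith [hξ.1]))) (a := 0)
    fun x hx => neg_pos.2 (hneg x ⟨by linarith [hx.1, hξ.1], hx.2⟩ (by linarith [hx.1]))
  filter_upwards [eventually_mul_lt N hν₁, eventually_mul_lt N hν₂,
    eventually_mul_lt D (by linarith : 0 < -f' / 2), self_mem_nhdsWithin]
    with ε hε₁ hε₂ hεD (hε : 0 < ε) x hx y hy hxy hfx
  by_contra! hfy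
  have hεw (z : ℝ) (hz : z ∈ Icc α β) : |ε * w z| ≤ ε * N := by
    rw [abs_mul, abs_of_pos hε]
    exact mul_le_mul_of_nonneg_left (hN z hz) hε.le
  have hxξ : ξ - d < x := by
    by_contra! hle
    linarith [hleft x ⟨hx.1, hle⟩, le_of_abs_le (hεw x hx)]
  have hyξ : y < ξ + d := by
    by_contra! hle
    linarith [hright y ⟨hle, hy.2⟩, neg_le_of_abs_le (hεw y hy)]
  have hslope := hslope x ⟨hxξ, hxy.trans hyξ⟩ y ⟨hxξ.trans hxy, hyξ⟩ hxy
  have hlip : w x - w y ≤ D * (y - x) := by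
    have h := hw.dist_le_mul x hx y hy
    rw [dist_comm x, Real.dist_eq, Real.dist_eq, abs_of_pos (sub_pos.2 hxy)] at h
    exact le_of_abs_le h
  have hεlip := mul_le_mul_of_nonneg_left hlip hε.le
  have hεslope := mul_lt_mul_of_pos_right hεD (sub_pos.2 hxy)
  linarith

lemma exists_hasDerivAt_sub_affine_le {B c u : ℝ → ℝ → ℝ} {M τ ε K p s x t : ℝ}
    (hu : HasDerivAt (fun y => u y t) 0 x ∨ SolvesAt B c u x t) (hτ : |τ| = 1) (hε : 0 < ε)
    (hB : |B x t| ≤ M) (hc : |c x t| ≤ M) (hK : M * (2 + |τ * (p - 2 * x) + K * (t - s)|) ≤ K)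
    (hpos : 0 < τ * u x t - ε * (τ * (p - 2 * x) + K * (t - s)))
    (hmax : IsLocalMax (fun y => τ * u y t - ε * (τ * (p - 2 * y) + K * (t - s))) x) :
    ∃ d ≤ M * (τ * u x t - ε * (τ * (p - 2 * x) + K * (t - s))),
      HasDerivAt (fun r => τ * u x r - ε * (τ * (p - 2 * x) + K * (r - s))) d t := by
  have hspace (y : ℝ) :
      HasDerivAt (fun y => ε * (τ * (p - 2 * y) + K * (t - s))) (-2 * ε * τ) y :=
    ((((((hasDerivAt_id y).const_mul 2).const_sub p).const_mul τ).add_const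
      (K * (t - s))).const_mul ε).congr_deriv (by ring)
  have htime : HasDerivAt (fun r => ε * (τ * (p - 2 * x) + K * (r - s))) (ε * K) t :=
    (((((hasDerivAt_id t).sub_const s).const_mul K).const_add
      (τ * (p - 2 * x))).const_mul ε).congr_deriv (by ring)
  have hτ0 : τ ≠ 0 := by rintro rfl; simp at hτ
  refine exists_hasDerivAt_sub_le_of_noncritical (B := B) (c := c) (u := fun x t => τ * u x t)
    (φ := fun x r => ε * (τ * (p - 2 * x) + K * (r - s))) (φ' := fun _ => -2 * ε * τ)
    (hu.imp (fun h => by simpa using h.const_mul τ) fun h => h.const_mul τ)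
    (Eventually.of_forall hspace) (hasDerivAt_const x _) htime ?_ (le_of_abs_le hc) hpos hmax
    (mul_ne_zero (mul_ne_zero (by norm_num) hε.ne') hτ0)
  have hdrift : B x t * -τ ≤ M := by
    refine le_of_abs_le ?_
    rwa [abs_mul, abs_neg, hτ, mul_one]
  have hpotential : c x t * (τ * (p - 2 * x) + K * (t - s)) ≤
      M * |τ * (p - 2 * x) + K * (t - s)| := by
    refine le_of_abs_le ?_
    rw [abs_mul]
    exact mul_le_mul_of_nonneg_right hc (abs_nonneg _)
  calc 0 + B x t * (-2 * ε * τ) + c x t * (ε * (τ * (p - 2 * x) + K * (t - s)))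
      = ε * (2 * (B x t * -τ) + c x t * (τ * (p - 2 * x) + K * (t - s))) := by ring
    _ ≤ ε * K := mul_le_mul_of_nonneg_left (by linarith) hε.le

lemma mul_two_add_abs_le {M L τ w r : ℝ} (hM : 0 ≤ M) (hτ : |τ| = 1) (hw : |w| ≤ 2 * L)
    (hr : 0 ≤ r) (hrL : r ≤ L) : M * (2 + |τ * w + r|) ≤ M * (2 + 3 * L) := by
  refine mul_le_mul_of_nonneg_left (add_le_add_right ((abs_add_le _ _).trans ?_) 2) hM
  rw [abs_mul, hτ, one_mul, abs_of_nonneg hr]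
  linarith

lemma SolvesOffCritical.exists_lt_mul_and_mul_lt {B c u : ℝ → ℝ → ℝ} {M α β s T1 z₁ z₂ ε : ℝ}
    (h : SolvesOffCritical B c u M α β s T1) (hsT1 : s ≤ T1) (hM : 0 ≤ M) (hε : 0 < ε)
    (hz₁ : z₁ ∈ Icc α β) (hz₂ : z₂ ∈ Icc α β) (hzero₁ : u z₁ T1 = 0) (hzero₂ : u z₂ T1 = 0)
    (hclose : M * (2 + 3 * (β - α)) * (T1 - s) < z₂ - z₁)
    (hα : ∀ t ∈ Icc s T1, ε * (2 * (β - α)) ≤ u α t)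
    (hβ : ∀ t ∈ Icc s T1, u β t ≤ -(ε * (2 * (β - α)))) :
    ∃ x ∈ Ioo α β, ∃ y ∈ Ioo α β, x < y ∧
      u x s < ε * (z₁ + z₂ - 2 * x) ∧ ε * (z₁ + z₂ - 2 * y) < u y s := by
  set K := M * (2 + 3 * (β - α))
  have hαβ : α ≤ β := hz₁.1.trans hz₁.2
  have hK0 : 0 ≤ K := mul_nonneg hM (by linarith)
  have hKt {t : ℝ} (ht : t ∈ Icc s T1) : K * (t - s) ∈ Icc 0 (K * (T1 - s)) :=
    ⟨mul_nonneg hK0 (sub_nonneg.2 ht.1), mul_le_mul_of_nonneg_left (by linarith [ht.2]) hK0⟩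
  have hw {x : ℝ} (hx : x ∈ Icc α β) : |z₁ + z₂ - 2 * x| ≤ 2 * (β - α) :=
    abs_le.2 ⟨by linarith [hz₁.1, hz₂.1, hx.2], by linarith [hz₁.2, hz₂.2, hx.1]⟩
  let F (τ x t : ℝ) : ℝ := τ * u x t - ε * (τ * (z₁ + z₂ - 2 * x) + K * (t - s))
  have hFcont (τ : ℝ) : ContinuousOn (fun p : ℝ × ℝ => F τ p.1 p.2) (Icc α β ×ˢ Icc s T1) :=
    (continuousOn_const.mul h.continuousOn).sub (by fun_prop)
  have hFderiv {τ : ℝ} (hτ : |τ| = 1) : ∀ x ∈ Ioo α β, ∀ t ∈ Ioc s T1, 0 < F τ x t →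
      IsLocalMax (fun y => F τ y t) x → ∃ d ≤ M * F τ x t, HasDerivAt (F τ x) d t :=
    fun x hx t ht => exists_hasDerivAt_sub_affine_le (h.critical_or_solvesAt x hx t ht)
      hτ hε (h.abs_drift_le x hx t ht) (h.abs_potential_le x hx t ht)
      (mul_two_add_abs_le hM hτ (hw (Ioo_subset_Icc_self hx)) (hKt (Ioc_subset_Icc_self ht)).1
        (by linarith [(hKt (Ioc_subset_Icc_self ht)).2, hz₁.1, hz₂.2]))
  have hεK {t : ℝ} (ht : t ∈ Icc s T1) : 0 ≤ ε * (K * (t - s)) := mul_nonneg hε.le (hKt ht).1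
  have hεw {x : ℝ} (hx : x ∈ Icc α β) : |ε * (z₁ + z₂ - 2 * x)| ≤ ε * (2 * (β - α)) := by
    rw [abs_mul, abs_of_pos hε]
    exact mul_le_mul_of_nonneg_left (hw hx) hε.le
  have hstart := mul_pos hε (sub_pos.2 hclose)
  obtain ⟨x, hx, y, hy, hxy, hFx, hFy⟩ := exists_lt_pos_of_isLocalMax_deriv_le (hFcont (-1))
    (hFcont 1) (hFderiv (by simp)) (hFderiv (by simp))
    (fun x _ t ht hpos => by simp only [F] at hpos ⊢; linarith [hεK ht])
    (fun t ht => by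
      simp only [F]
      linarith [hεK ht, hα t ht, le_of_abs_le (hεw (left_mem_Icc.2 hαβ))])
    (fun t ht => by
      simp only [F]
      linarith [hεK ht, hβ t ht, neg_le_of_abs_le (hεw (right_mem_Icc.2 hαβ))])
    (right_mem_Icc.2 hsT1) hz₁ hz₂ (by nlinarith [(hKt (right_mem_Icc.2 hsT1)).1])
    (by simp only [F, hzero₁]; linarith) (by simp only [F, hzero₂]; linarith)
  simp only [F] at hFx hFy
  exact ⟨x, hx, y, hy, hxy, by linarith, by linarith⟩

namespace HasSingleSignChange

variable {B c u : ℝ → ℝ → ℝ} {M α β T0 T1 : ℝ}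

open scoped NNReal in
lemma eventually_forall_le_mul_of_nondegenerate_zero (h : HasSingleSignChange B c u M α β T0 T1)
    {s ξ : ℝ} (hs : s ∈ Ioc T0 T1) (hξ : ξ ∈ Ioo α β) (hzero : u ξ s = 0)
    (hcrit : ¬HasDerivAt (fun y => u y s) 0 ξ) {w : ℝ → ℝ} {D : ℝ≥0}
    (hw : LipschitzOnWith D w (Icc α β)) :
    ∀ᶠ ε in 𝓝[>] (0 : ℝ), ∀ x ∈ Icc α β, ∀ y ∈ Icc α β, x < y → u x s < ε * w x →
      u y s ≤ ε * w y := by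
  have hstrict : HasStrictDerivAt (fun y => u y s) (deriv (fun y => u y s) ξ) ξ :=
    (h.solvesAt_of_not_critical hξ hs hcrit).1.hasStrictDerivAt (by simp)
  have hne : deriv (fun y => u y s) ξ ≠ 0 := fun h0 => hcrit (h0 ▸ hstrict.hasDerivAt)
  exact eventually_forall_le_mul_of_lt_mul hξ
    (h.continuousOn_space (Ioc_subset_Icc_self hs))
    (fun x => h.pos_of_lt_nondegenerate_zero hs hξ hzero hstrict.hasDerivAt hne)
    (fun x => h.neg_of_gt_nondegenerate_zero hs hξ hzero hstrict.hasDerivAt hne) hstrict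
    (h.deriv_neg_of_nondegenerate_zero hs hξ hzero hstrict.hasDerivAt hne) hw

lemma eventually_forall_mul_le_endpoints (h : HasSingleSignChange B c u M α β T0 T1)
    (hαβ : α ≤ β) (a : ℝ) :
    ∀ᶠ ε in 𝓝[>] (0 : ℝ), ∀ t ∈ Icc T0 T1, ε * a ≤ u α t ∧ u β t ≤ -(ε * a) := by
  obtain ⟨ν₁, hν₁, hleft⟩ := isCompact_Icc.exists_forall_le'
    (h.continuousOn_time (left_mem_Icc.2 hαβ)) h.pos_left
  obtain ⟨ν₂, hν₂, hright⟩ := isCompact_Icc.exists_forall_le' (f := fun t => -u β t)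
    (a := 0) (h.continuousOn_time (right_mem_Icc.2 hαβ)).neg
    fun t ht => neg_pos.2 (h.neg_right t ht)
  filter_upwards [eventually_mul_lt a hν₁, eventually_mul_lt a hν₂] with ε hε₁ hε₂ t ht
  exact ⟨hε₁.le.trans (hleft t ht), by linarith [hright t ht]⟩

-- Two zeros at the final time would lie on opposite sides of the zero of an affine barrier `w`.
-- At an earlier time with a nondegenerate zero, `u - ε w` has a single sign change for small `ε`,
-- whereas the maximum principle propagates the wrong sign pattern back to that time.
theorem subsingleton_zeros (h : HasSingleSignChange B c u M α β T0 T1) (hT : T0 < T1) :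
    {z ∈ Icc α β | u z T1 = 0}.Subsingleton := by
  by_contra hne
  obtain ⟨z₁, ⟨hz₁, hzero₁⟩, z₂, ⟨hz₂, hzero₂⟩, hlt⟩ := (not_subsingleton_iff.1 hne).exists_lt
  have hαβ : α < β := hz₁.1.trans_lt (hlt.trans_le hz₂.2)
  have hM : 0 ≤ M := by
    obtain ⟨x, hx⟩ := exists_between hαβ
    exact (abs_nonneg _).trans (h.abs_drift_le x hx T1 ⟨hT, le_rfl⟩)
  obtain ⟨S, hS, hclose⟩ := exists_forall_Icc_lt_of_continuousOn
    (g := fun t => -(M * (2 + 3 * (β - α)) * (T1 - t))) (a := -(z₂ - z₁)) hT (by fun_prop)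
    (by simpa using hlt)
  obtain ⟨T', hST', hT'T1⟩ := exists_between hS.2
  obtain ⟨s, hs, ξ, hξ, hzero, hcrit⟩ :=
    (h.mono le_rfl le_rfl hS.1 hT'T1.le).exists_nondegenerate_zero hST' hαβ
      (h.pos_left T' ⟨hS.1.trans hST'.le, hT'T1.le⟩) (h.neg_right T' ⟨hS.1.trans hST'.le, hT'T1.le⟩)
  have hsT : s ∈ Ioc T0 T1 := ⟨hS.1.trans_lt hs.1, hs.2.trans hT'T1.le⟩
  have hw : LipschitzOnWith 2 (fun x => z₁ + z₂ - 2 * x) (Icc α β) :=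
    LipschitzOnWith.of_dist_le_mul fun x _ y _ => by
      rw [Real.dist_eq, Real.dist_eq, NNReal.coe_ofNat, ← abs_two, ← abs_mul, ← abs_neg]
      exact le_of_eq (congrArg _ (by ring))
  obtain ⟨ε, hsingle, hends, hε⟩ :=
    ((h.eventually_forall_le_mul_of_nondegenerate_zero hsT hξ hzero hcrit hw).and
      ((h.eventually_forall_mul_le_endpoints hαβ.le (2 * (β - α))).and self_mem_nhdsWithin)).exists
  have hsub : Icc s T1 ⊆ Icc T0 T1 := Icc_subset_Icc_left hsT.1.le
  obtain ⟨x, hx, y, hy, hxy, hux, huy⟩ :=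
    (h.mono le_rfl le_rfl hsT.1.le le_rfl).exists_lt_mul_and_mul_lt hsT.2 hM hε hz₁ hz₂ hzero₁
      hzero₂ (neg_lt_neg_iff.1 (hclose s ⟨hs.1.le, hsT.2⟩)) (fun t ht => (hends t (hsub ht)).1)
      fun t ht => (hends t (hsub ht)).2
  exact huy.not_ge (hsingle x (Ioo_subset_Icc_self hx) y (Ioo_subset_Icc_self hy) hxy hux)

end HasSingleSignChange

/-! ### Alternations -/

/-- The finite sequence `l` is an increasing sequence in `S` along which `f` is nonzero and
alternates in sign. -/
structure IsAlternation (f : ℝ → ℝ) (S : Set ℝ) (l : List ℝ) : Prop where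
  isChain : l.IsChain fun x y => x < y ∧ f x * f y < 0
  mem : ∀ x ∈ l, x ∈ S
  ne_zero : ∀ x ∈ l, f x ≠ 0

/-- The supremum of the lengths of the alternations of `f` in `S`. It is one more than the number
of sign changes of `f` on `S`, or zero if `f` vanishes on `S`. -/
noncomputable def alternationNumber (f : ℝ → ℝ) (S : Set ℝ) : ℕ∞ :=
  ⨆ l : {l : List ℝ // IsAlternation f S l}, (l.1.length : ℕ∞)

lemma mul_neg_of_mul_pos_of_mul_neg {a x y : ℝ} (hx : 0 < a * x) (hy : a * y < 0) : x * y < 0 := by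
  have h : a ^ 2 * (x * y) < 0 := by linarith [mul_neg_of_pos_of_neg hx hy]
  exact neg_of_mul_neg_right h (sq_nonneg a)

lemma mul_neg_of_mul_neg_of_mul_pos_of_mul_pos {a b x y : ℝ} (hab : a * b < 0) (hx : 0 < a * x)
    (hy : 0 < b * y) : x * y < 0 := by
  have hxb : b * x < 0 := by linarith [mul_neg_of_mul_pos_of_mul_neg hx hab]
  linarith [mul_neg_of_mul_pos_of_mul_neg hy hxb]

namespace IsAlternation

variable {f : ℝ → ℝ} {S : Set ℝ} {l l₁ l₂ : List ℝ} {a b x y σ : ℝ}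

protected lemma nil : IsAlternation f S [] :=
  ⟨.nil, by simp, by simp⟩

lemma length_le_alternationNumber (h : IsAlternation f S l) :
    (l.length : ℕ∞) ≤ alternationNumber f S :=
  le_iSup (fun l : {l : List ℝ // IsAlternation f S l} => (l.1.length : ℕ∞)) ⟨l, h⟩

lemma length_le_of_alternationNumber_le (h : IsAlternation f S l) {n : ℕ}
    (hn : alternationNumber f S ≤ n) : l.length ≤ n :=
  Nat.cast_le.1 (h.length_le_alternationNumber.trans hn)

lemma left_of_append (h : IsAlternation f S (l₁ ++ l₂)) : IsAlternation f S l₁ :=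
  ⟨h.isChain.left_of_append, fun x hx => h.mem x (by simp [hx]),
    fun x hx => h.ne_zero x (by simp [hx])⟩

lemma right_of_append (h : IsAlternation f S (l₁ ++ l₂)) : IsAlternation f S l₂ :=
  ⟨h.isChain.right_of_append, fun x hx => h.mem x (by simp [hx]),
    fun x hx => h.ne_zero x (by simp [hx])⟩

lemma singleton (hx : x ∈ S) (hfx : f x ≠ 0) : IsAlternation f S [x] :=
  ⟨.singleton x, by simpa, by simpa⟩

lemma append (h₁ : IsAlternation f S l₁) (h₂ : IsAlternation f S l₂)
    (h : ∀ x ∈ l₁.getLast?, ∀ y ∈ l₂.head?, x < y ∧ f x * f y < 0) :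
    IsAlternation f S (l₁ ++ l₂) where
  isChain := List.isChain_append.2 ⟨h₁.isChain, h₂.isChain, h⟩
  mem x hx := (List.mem_append.1 hx).elim (h₁.mem x) (h₂.mem x)
  ne_zero x hx := (List.mem_append.1 hx).elim (h₁.ne_zero x) (h₂.ne_zero x)

lemma mul_nonneg_of_lt_head (h : IsAlternation f S l)
    (hmax : alternationNumber f S ≤ l.length) (ha : a ∈ l.head?) (hσ : 0 < σ * f a) (hx : x ∈ S)
    (hxa : x < a) : 0 ≤ σ * f x := by
  by_contra! hneg
  have hlong : IsAlternation f S ([x] ++ l) :=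
    (singleton hx (right_ne_zero_of_mul hneg.ne)).append h fun x' hx' a' ha' => by
      obtain rfl : x = x' := by simpa using hx'
      obtain rfl : a = a' := Option.mem_unique ha ha'
      exact ⟨hxa, by linarith [mul_neg_of_mul_pos_of_mul_neg hσ hneg]⟩
  have hle := hlong.length_le_of_alternationNumber_le hmax
  simp at hle

lemma mul_nonneg_of_getLast_lt (h : IsAlternation f S l)
    (hmax : alternationNumber f S ≤ l.length) (ha : a ∈ l.getLast?) (hσ : 0 < σ * f a) (hx : x ∈ S)
    (hax : a < x) : 0 ≤ σ * f x := by
  by_contra! hneg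
  have hlong : IsAlternation f S (l ++ [x]) :=
    h.append (singleton hx (right_ne_zero_of_mul hneg.ne)) fun a' ha' x' hx' => by
      obtain rfl : x = x' := by simpa using hx'
      obtain rfl : a = a' := Option.mem_unique ha ha'
      exact ⟨hax, mul_neg_of_mul_pos_of_mul_neg hσ hneg⟩
  have hle := hlong.length_le_of_alternationNumber_le hmax
  simp at hle

lemma mul_nonpos_of_mul_neg_of_lt (h : IsAlternation f S (l₁ ++ a :: b :: l₂))
    (hmax : alternationNumber f S ≤ (l₁ ++ a :: b :: l₂).length) (hx : x ∈ S) (hy : y ∈ S)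
    (hax : a < x) (hxy : x < y) (hyb : y < b) (hσ : 0 < σ * f a) (hneg : σ * f x < 0) :
    σ * f y ≤ 0 := by
  by_contra! hpos
  obtain ⟨hl₁, ⟨-, hab⟩, hl₂⟩ := List.isChain_append_cons_cons.1 h.isChain
  have hax' : f a * f x < 0 := mul_neg_of_mul_pos_of_mul_neg hσ hneg
  have hyx : f y * f x < 0 := mul_neg_of_mul_pos_of_mul_neg hpos hneg
  have hσb : σ * f b < 0 := mul_neg_of_mul_pos_of_mul_neg (by linarith) hab
  have hyb' : f y * f b < 0 := mul_neg_of_mul_pos_of_mul_neg hpos hσb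
  have hlong : IsAlternation f S (l₁ ++ a :: x :: y :: b :: l₂) :=
    { isChain := List.isChain_append_cons_cons.2 ⟨hl₁, ⟨hax, hax'⟩,
        .cons_cons ⟨hxy, by linarith⟩ (.cons_cons ⟨hyb, hyb'⟩ hl₂)⟩
      mem := by have hmem := h.mem; grind
      ne_zero := by
        have hfx : f x ≠ 0 := right_ne_zero_of_mul hneg.ne
        have hfy : f y ≠ 0 := right_ne_zero_of_mul hpos.ne'
        have hne := h.ne_zero
        grind }
  have hle := hlong.length_le_of_alternationNumber_le hmax
  simp at hle

lemma strictMono_get (h : IsAlternation f S l) : StrictMono l.get :=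
  (h.isChain.imp fun _ _ hxy => hxy.1).sortedLT.strictMono_get

lemma mul_getElem_neg (h : IsAlternation f S l) {i j : Fin l.length} (hij : (i : ℕ) + 1 = j) :
    f l[i] * f l[j] < 0 := by
  have hchain := List.isChain_iff_getElem.1 h.isChain i (by omega)
  simpa [hij] using hchain.2

lemma ofFn (h : IsAlternation f S l) {g : ℝ → ℝ} {S' : Set ℝ} {x : Fin l.length → ℝ}
    (hx : StrictMono x) (hxS : ∀ i, x i ∈ S') (hpos : ∀ i, (0 : ℝ) < f l[i] * g (x i)) :
    IsAlternation g S' (List.ofFn x) where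
  isChain := List.isChain_ofFn.2 fun i hi => by
    refine ⟨hx (Fin.mk_lt_mk.2 i.lt_succ_self), ?_⟩
    have hneg := h.mul_getElem_neg (i := ⟨i, by omega⟩) (j := ⟨i + 1, hi⟩) rfl
    exact mul_neg_of_mul_neg_of_mul_pos_of_mul_pos hneg (hpos ⟨i, by omega⟩) (hpos ⟨i + 1, hi⟩)
  mem := by simpa [List.forall_mem_ofFn_iff] using hxS
  ne_zero := by
    simpa [List.forall_mem_ofFn_iff] using fun i => right_ne_zero_of_mul (hpos i).ne'

lemma of_mul_pos (h : IsAlternation f S l) {g : ℝ → ℝ} (hpos : ∀ x ∈ l, 0 < f x * g x) :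
    IsAlternation g S l := by
  simpa using h.ofFn h.strictMono_get (fun i => h.mem _ (l.get_mem i))
    fun i => hpos _ (l.get_mem i)

end IsAlternation

section AlternationNumber

variable {f : ℝ → ℝ} {S Z : Set ℝ} {l : List ℝ} {a : ℝ}

lemma exists_isAlternation_of_alternationNumber_ne_top (h : alternationNumber f S ≠ ⊤) :
    ∃ l, IsAlternation f S l ∧ alternationNumber f S = l.length := by
  have : Nonempty {l : List ℝ // IsAlternation f S l} := ⟨⟨[], .nil⟩⟩
  obtain ⟨⟨l, hl⟩, hlen⟩ := ENat.exists_eq_iSup_of_lt_top h.lt_top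
  exact ⟨l, hl, hlen.symm⟩

lemma eq_zero_of_alternationNumber_eq_zero (h : alternationNumber f S = 0) {x : ℝ} (hx : x ∈ S) :
    f x = 0 := by
  by_contra hfx
  simpa [h] using (IsAlternation.singleton hx hfx).length_le_alternationNumber

lemma exists_mem_Ioo_eq_zero_of_mul_neg {a b : ℝ} (hf : ContinuousOn f (Icc a b)) (hab : a < b)
    (hneg : f a * f b < 0) : ∃ x ∈ Ioo a b, f x = 0 := by
  rcases mul_neg_iff.1 hneg with ⟨ha, hb⟩ | ⟨ha, hb⟩
  · exact intermediate_value_Ioo' hab.le hf ⟨hb, ha⟩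
  · exact intermediate_value_Ioo hab.le hf ⟨ha, hb⟩

lemma IsAlternation.length_le_encard_zeros_inter_Ici (hS : S.OrdConnected)
    (hf : ContinuousOn f S) (h : IsAlternation f S (a :: l)) :
    (l.length : ℕ∞) ≤ ({x ∈ S | f x = 0} ∩ Ici a).encard := by
  induction l generalizing a with
  | nil => simp
  | cons b l ih =>
    obtain ⟨⟨hab, hneg⟩, -⟩ := List.isChain_cons_cons.1 h.isChain
    have hsub : Icc a b ⊆ S := hS.out (h.mem a (by simp)) (h.mem b (by simp))
    obtain ⟨x, ⟨hax, hxb⟩, hx⟩ := exists_mem_Ioo_eq_zero_of_mul_neg (hf.mono hsub) hab hneg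
    have hinsert : insert x ({x ∈ S | f x = 0} ∩ Ici b) ⊆ {x ∈ S | f x = 0} ∩ Ici a :=
      insert_subset ⟨⟨hsub ⟨hax.le, hxb.le⟩, hx⟩, hax.le⟩
        (inter_subset_inter_right _ (Ici_subset_Ici.2 hab.le))
    calc ((b :: l).length : ℕ∞) = l.length + 1 := by simp
      _ ≤ ({x ∈ S | f x = 0} ∩ Ici b).encard + 1 := by
        gcongr; exact ih (h.right_of_append (l₁ := [a]))
      _ = (insert x ({x ∈ S | f x = 0} ∩ Ici b)).encard :=
        (encard_insert_of_notMem fun hmem => hxb.not_ge hmem.2).symm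
      _ ≤ ({x ∈ S | f x = 0} ∩ Ici a).encard := encard_le_encard hinsert

theorem alternationNumber_le_encard_zeros_add_one (hS : S.OrdConnected) (hf : ContinuousOn f S) :
    alternationNumber f S ≤ {x ∈ S | f x = 0}.encard + 1 := by
  refine iSup_le fun ⟨l, hl⟩ => ?_
  cases l with
  | nil => simp
  | cons a l =>
    calc ((a :: l).length : ℕ∞) = l.length + 1 := by simp
      _ ≤ {x ∈ S | f x = 0}.encard + 1 := by
        gcongr
        exact (hl.length_le_encard_zeros_inter_Ici hS hf).trans (encard_le_encard inter_subset_left)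

lemma encard_inter_Ici_le_length
    (h : (a :: l).IsChain fun x y => (Z ∩ Icc x y).Subsingleton)
    (hlast : ∀ b ∈ (a :: l).getLast?, ∀ z ∈ Z, z < b) : (Z ∩ Ici a).encard ≤ l.length := by
  induction l generalizing a with
  | nil =>
    have hempty : Z ∩ Ici a = ∅ := disjoint_iff_inter_eq_empty.1 <|
      disjoint_left.2 fun z hz => not_le.2 (hlast a (by simp) z hz)
    simp [hempty]
  | cons b l ih =>
    obtain ⟨hab, hl⟩ := List.isChain_cons_cons.1 h
    have hcover : Z ∩ Ici a ⊆ (Z ∩ Ici b) ∪ (Z ∩ Icc a b) := fun z ⟨hz, haz⟩ =>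
      (le_total b z).imp (fun h => ⟨hz, h⟩) fun h => ⟨hz, haz, h⟩
    calc (Z ∩ Ici a).encard ≤ ((Z ∩ Ici b) ∪ (Z ∩ Icc a b)).encard := encard_le_encard hcover
      _ ≤ (Z ∩ Ici b).encard + (Z ∩ Icc a b).encard := encard_union_le _ _
      _ ≤ l.length + 1 := by
        gcongr
        · exact ih hl (by simpa using hlast)
        · exact encard_le_one_iff_subsingleton.2 hab
      _ = ((b :: l).length : ℕ∞) := by simp

end AlternationNumber

/-! ### Alternations of solutions backward in time -/

/-- A continuous function on `[α, β] × (t1, t2)` which solves `v_t = v_xx + B v_x + c v` in the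
interior. The coefficients are locally bounded, and near the lateral boundary `c` is bounded only
from above, which admits inverse-square potentials such as `-b / x ^ 2`. -/
structure IsParabolicSolution (B c v : ℝ → ℝ → ℝ) (α β t1 t2 : ℝ) : Prop where
  continuousOn : ContinuousOn (fun p : ℝ × ℝ => v p.1 p.2) (Icc α β ×ˢ Ioo t1 t2)
  solvesAt : ∀ x ∈ Ioo α β, ∀ t ∈ Ioo t1 t2, SolvesAt B c v x t
  bddAbove_abs_drift : ∀ K ⊆ Ioo α β ×ˢ Ioo t1 t2, IsCompact K →
    BddAbove ((fun p : ℝ × ℝ => |B p.1 p.2|) '' K)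
  bddAbove_abs_potential : ∀ K ⊆ Ioo α β ×ˢ Ioo t1 t2, IsCompact K →
    BddAbove ((fun p : ℝ × ℝ => |c p.1 p.2|) '' K)
  bddAbove_potential : ∀ s t, Icc s t ⊆ Ioo t1 t2 →
    BddAbove ((fun p : ℝ × ℝ => c p.1 p.2) '' (Ioo α β ×ˢ Icc s t))

lemma mul_pos_of_continuousOn_of_ne_zero {g : ℝ → ℝ} {s t : ℝ} (hg : ContinuousOn g (Icc s t))
    (hne : ∀ r ∈ Icc s t, g r ≠ 0) {r r' : ℝ} (hr : r ∈ Icc s t) (hr' : r' ∈ Icc s t) :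
    0 < g r * g r' := by
  by_contra! hneg
  have hzero : (0 : ℝ) ∈ uIcc (g r) (g r') := by
    rcases mul_nonpos_iff.1 hneg with ⟨h, h'⟩ | ⟨h, h'⟩
    · exact mem_uIcc.2 (Or.inr ⟨h', h⟩)
    · exact mem_uIcc.2 (Or.inl ⟨h, h'⟩)
  have hsub : uIcc r r' ⊆ Icc s t := uIcc_subset_Icc hr hr'
  obtain ⟨z, hz, hgz⟩ := intermediate_value_uIcc (hg.mono hsub) hzero
  exact hne z (hsub hz) hgz

lemma forall_mul_nonpos_or_forall_mul_pos {g : ℝ → ℝ} {a s t : ℝ} (hg : ContinuousOn g (Icc s t))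
    (h : (∀ r ∈ Icc s t, g r = 0) ∨ ∀ r ∈ Icc s t, g r ≠ 0) :
    (∀ r ∈ Icc s t, a * g r ≤ 0) ∨ ∀ r ∈ Icc s t, 0 < a * g r := by
  rcases h with hzero | hne
  · exact Or.inl fun r hr => by simp [hzero r hr]
  refine or_iff_not_imp_left.2 fun hnot r hr => ?_
  push Not at hnot
  obtain ⟨r₀, hr₀, hpos⟩ := hnot
  have ha : a ≠ 0 := left_ne_zero_of_mul hpos.ne'
  exact (pos_iff_pos_of_mul_pos (mul_pos_of_continuousOn_of_ne_zero (continuousOn_const.mul hg)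
    (fun r hr => mul_ne_zero ha (hne r hr)) hr₀ hr)).1 hpos

lemma exists_mem_Ioo_pos_of_mem_Icc {f : ℝ → ℝ} {a b x : ℝ} (hab : a < b)
    (hf : ContinuousOn f (Icc a b)) (hx : x ∈ Icc a b) (hfx : 0 < f x) :
    ∃ y ∈ Ioo a b, 0 < f y := by
  have hnear : ∀ᶠ y in 𝓝[Ioo a b] x, 0 < f y :=
    ((hf x hx).mono Ioo_subset_Icc_self).eventually (lt_mem_nhds hfx)
  rw [← closure_Ioo hab.ne, mem_closure_iff_nhdsWithin_neBot] at hx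
  exact (eventually_mem_nhdsWithin.and hnear).exists

lemma exists_lt_head_pos {f : ℝ → ℝ} {α β : ℝ} {l : List ℝ} (hαβ : α < β)
    (hf : ContinuousOn f (Icc α β)) (hα : 0 < f α) (hl : ∀ x ∈ l, x ∈ Ioo α β) :
    ∃ z ∈ Ioo α β, (∀ x ∈ l.head?, z < x) ∧ 0 < f z := by
  obtain ⟨d, hd, hdl⟩ : ∃ d ∈ Ioc α β, ∀ x ∈ l.head?, d ≤ x := by
    cases l with
    | nil => exact ⟨β, ⟨hαβ, le_rfl⟩, by simp⟩
    | cons x l => exact ⟨x, Ioo_subset_Ioc_self (hl x (by simp)), by simp⟩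
  obtain ⟨z, hz, hfz⟩ := exists_mem_Ioo_pos_of_mem_Icc hd.1 (hf.mono (Icc_subset_Icc_right hd.2))
    (left_mem_Icc.2 hd.1.le) hα
  exact ⟨z, ⟨hz.1, hz.2.trans_le hd.2⟩, fun x hx => hz.2.trans_le (hdl x hx), hfz⟩

lemma exists_getLast_lt_pos {f : ℝ → ℝ} {α β : ℝ} {l : List ℝ} (hαβ : α < β)
    (hf : ContinuousOn f (Icc α β)) (hβ : 0 < f β) (hl : ∀ x ∈ l, x ∈ Ioo α β) :
    ∃ z ∈ Ioo α β, (∀ x ∈ l.getLast?, x < z) ∧ 0 < f z := by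
  obtain ⟨d, hd, hdl⟩ : ∃ d ∈ Ico α β, ∀ x ∈ l.getLast?, x ≤ d := by
    obtain rfl | ⟨l, x, rfl⟩ := l.eq_nil_or_concat'
    · exact ⟨α, ⟨le_rfl, hαβ⟩, by simp⟩
    · exact ⟨x, Ioo_subset_Ico_self (hl x (by simp)), by simp⟩
  obtain ⟨z, hz, hfz⟩ := exists_mem_Ioo_pos_of_mem_Icc hd.2 (hf.mono (Icc_subset_Icc_left hd.1))
    (right_mem_Icc.2 hd.2.le) hβ
  exact ⟨z, ⟨hd.1.trans_lt hz.1, hz.2⟩, fun x hx => (hdl x hx).trans_lt hz.1, hfz⟩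

section Forall₂

variable {ι κ : Type*} {r : ι → κ → Prop} {l : List ι} {l' : List κ} {y : κ}

lemma forall₂_exists_mem_head? (h : List.Forall₂ r l l') (hy : y ∈ l'.head?) :
    ∃ x ∈ l.head?, r x y := by
  cases h with
  | nil => simp at hy
  | cons hxy _ => obtain rfl := Option.some_inj.1 hy; exact ⟨_, rfl, hxy⟩

lemma forall₂_exists_mem_getLast? (h : List.Forall₂ r l l') (hy : y ∈ l'.getLast?) :
    ∃ x ∈ l.getLast?, r x y := by
  rw [← List.head?_reverse] at hy
  simpa using forall₂_exists_mem_head? (List.forall₂_reverse_iff.2 h) hy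

lemma forall₂_ofFn {f : Fin l.length → κ} (h : ∀ i, r l[i] (f i)) :
    List.Forall₂ r l (List.ofFn f) :=
  List.forall₂_iff_get.2 ⟨by simp, fun i hi _ => by simpa using h ⟨i, hi⟩⟩

end Forall₂

namespace IsParabolicSolution

variable {B c v : ℝ → ℝ → ℝ} {α β t1 t2 s t : ℝ} {l : List ℝ}

lemma continuousOn_time (h : IsParabolicSolution B c v α β t1 t2) {x : ℝ} (hx : x ∈ Icc α β) :
    ContinuousOn (v x) (Ioo t1 t2) :=
  h.continuousOn.comp (f := fun t => (x, t)) (by fun_prop) fun _ ht => ⟨hx, ht⟩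

lemma continuousOn_space (h : IsParabolicSolution B c v α β t1 t2) (ht : t ∈ Ioo t1 t2) :
    ContinuousOn (fun x => v x t) (Icc α β) :=
  h.continuousOn.comp (f := fun x => (x, t)) (by fun_prop) fun _ hx => ⟨hx, ht⟩

lemma exists_solvesOffCritical (h : IsParabolicSolution B c v α β t1 t2) {p q : ℝ}
    (hpq : Icc p q ⊆ Ioo α β) (hst : Icc s t ⊆ Ioo t1 t2) :
    ∃ M, SolvesOffCritical B c v M p q s t := by
  have hK : Icc p q ×ˢ Icc s t ⊆ Ioo α β ×ˢ Ioo t1 t2 := prod_mono hpq hst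
  have hcompact : IsCompact (Icc p q ×ˢ Icc s t) := isCompact_Icc.prod isCompact_Icc
  obtain ⟨M₁, hM₁⟩ := h.bddAbove_abs_drift _ hK hcompact
  obtain ⟨M₂, hM₂⟩ := h.bddAbove_abs_potential _ hK hcompact
  refine ⟨max M₁ M₂, h.continuousOn.mono (prod_mono (hpq.trans Ioo_subset_Icc_self) hst),
    fun x hx t ht => ?_, fun x hx t ht => ?_, fun x hx t ht => Or.inr ?_⟩
  · exact le_max_of_le_left (hM₁ ⟨(x, t), ⟨Ioo_subset_Icc_self hx, Ioc_subset_Icc_self ht⟩, rfl⟩)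
  · exact le_max_of_le_right (hM₂ ⟨(x, t), ⟨Ioo_subset_Icc_self hx, Ioc_subset_Icc_self ht⟩, rfl⟩)
  · exact h.solvesAt x (hpq (Ioo_subset_Icc_self hx)) t (hst (Ioc_subset_Icc_self ht))

lemma exists_isAlternation_of_boundary_nonpos (h : IsParabolicSolution B c v α β t1 t2)
    (hst : Icc s t ⊆ Ioo t1 t2) (hle : s ≤ t) (hl : IsAlternation (fun x => v x t) (Ioo α β) l)
    (hα : ∀ x ∈ l.head?, ∀ r ∈ Icc s t, v x t * v α r ≤ 0)
    (hβ : ∀ x ∈ l.getLast?, ∀ r ∈ Icc s t, v x t * v β r ≤ 0) :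
    ∃ l', IsAlternation (fun x => v x s) (Ioo α β) l' ∧
      List.Forall₂ (fun x y => 0 < v x t * v y s) l l' := by
  obtain ⟨C, hC⟩ := h.bddAbove_potential s t hst
  have hevolve : ∃ x : Fin l.length → ℝ, StrictMono x ∧ (∀ i, x i ∈ Ioo α β) ∧
      ∀ i, (0 : ℝ) < v l[i] t * v (x i) s := by
    refine exists_strictMono_pos_of_isLocalMax_deriv_le (u := fun i x r => v l[i] t * v x r)
      (x₁ := l.get) (C := C) (T1 := t) (fun i => ?_) (fun i x hx r hr hpos hmax => ?_)
      (fun i j hij x _ r _ hpos => ?_) (fun i hi => hα _ ?_) (fun i hi => hβ _ ?_) ⟨hle, le_rfl⟩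
      hl.strictMono_get (fun i => Ioo_subset_Icc_self (hl.mem _ (l.get_mem i)))
      fun i => mul_self_pos.2 (hl.ne_zero _ (l.get_mem i))
    · exact continuousOn_const.mul (h.continuousOn.mono (prod_mono_right hst))
    · have hsol := h.solvesAt x hx r (hst (Ioc_subset_Icc_self hr))
      have hcC : c x r ≤ C := hC ⟨(x, r), ⟨hx, Ioc_subset_Icc_self hr⟩, rfl⟩
      simpa using (hsol.const_mul (v l[i] t)).exists_hasDerivAt_sub_le (φ := fun _ _ => 0)
        (.of_forall fun y => hasDerivAt_const y 0) (hasDerivAt_const x 0) (hasDerivAt_const r 0)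
        (by simp) hcC (by simpa using hpos) (by simpa using hmax)
    · have hneg : v l[i] t * v l[j] t < 0 := hl.mul_getElem_neg hij
      linarith [mul_neg_of_mul_pos_of_mul_neg hpos hneg]
    · rw [List.head?_eq_getElem?]
      simp [← hi]
    · rw [List.getLast?_eq_getElem?]
      simp [← hi]
  obtain ⟨x, hx, hxI, hxpos⟩ := hevolve
  exact ⟨List.ofFn x, hl.ofFn hx hxI hxpos, forall₂_ofFn hxpos⟩

lemma exists_isAlternation_of_left (h : IsParabolicSolution B c v α β t1 t2)
    (hst : Icc s t ⊆ Ioo t1 t2) (hle : s ≤ t) (hl : IsAlternation (fun x => v x t) (Ioo α β) l)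
    (hα : (∀ r ∈ Icc s t, v α r = 0) ∨ ∀ r ∈ Icc s t, v α r ≠ 0)
    (hβ : ∀ x ∈ l.getLast?, ∀ r ∈ Icc s t, v x t * v β r ≤ 0) :
    ∃ l', IsAlternation (fun x => v x s) (Ioo α β) l' ∧
      List.Forall₂ (fun x y => 0 < v x t * v y s) l l' := by
  obtain - | ⟨a, l⟩ := l
  · exact ⟨[], .nil, .nil⟩
  have ha : a ∈ Ioo α β := hl.mem a (by simp)
  have hαβ : α < β := ha.1.trans ha.2
  have hs : s ∈ Icc s t := left_mem_Icc.2 hle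
  rcases forall_mul_nonpos_or_forall_mul_pos (a := v a t)
    ((h.continuousOn_time (left_mem_Icc.2 hαβ.le)).mono hst) hα with hnonpos | hpos
  · exact h.exists_isAlternation_of_boundary_nonpos hst hle hl (by simpa using hnonpos) hβ
  have hneg : ∀ x ∈ l.head?, v a t * v x t < 0 := fun x hx =>
    ((List.isChain_cons.1 hl.isChain).1 x hx).2
  obtain ⟨l', hl', hll'⟩ := h.exists_isAlternation_of_boundary_nonpos hst hle
    (hl.right_of_append (l₁ := [a]))
    (fun x hx r hr => by linarith [mul_neg_of_mul_pos_of_mul_neg (hpos r hr) (hneg x hx)])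
    (fun x hx => hβ x (by simp [List.getLast?_cons, Option.mem_def.1 hx]))
  obtain ⟨z, hz, hzl', hzpos⟩ := exists_lt_head_pos (f := fun y => v a t * v y s) hαβ
    (continuousOn_const.mul (h.continuousOn_space (hst hs))) (hpos s hs) hl'.mem
  refine ⟨[z] ++ l', (IsAlternation.singleton hz (right_ne_zero_of_mul hzpos.ne')).append hl'
    fun z' hz' y hy => ?_, hll'.cons hzpos⟩
  obtain rfl : z = z' := by simpa using hz'
  obtain ⟨x, hx, hxy⟩ := forall₂_exists_mem_head? hll' hy
  exact ⟨hzl' y hy, mul_neg_of_mul_neg_of_mul_pos_of_mul_pos (hneg x hx) hzpos hxy⟩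

theorem exists_isAlternation_of_le (h : IsParabolicSolution B c v α β t1 t2)
    (hst : Icc s t ⊆ Ioo t1 t2) (hle : s ≤ t) (hl : IsAlternation (fun x => v x t) (Ioo α β) l)
    (hα : (∀ r ∈ Icc s t, v α r = 0) ∨ ∀ r ∈ Icc s t, v α r ≠ 0)
    (hβ : (∀ r ∈ Icc s t, v β r = 0) ∨ ∀ r ∈ Icc s t, v β r ≠ 0) :
    ∃ l', IsAlternation (fun x => v x s) (Ioo α β) l' ∧
      List.Forall₂ (fun x y => 0 < v x t * v y s) l l' := by
  obtain rfl | ⟨l, a, rfl⟩ := l.eq_nil_or_concat'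
  · exact ⟨[], .nil, .nil⟩
  have ha : a ∈ Ioo α β := hl.mem a (by simp)
  have hαβ : α < β := ha.1.trans ha.2
  have hs : s ∈ Icc s t := left_mem_Icc.2 hle
  rcases forall_mul_nonpos_or_forall_mul_pos (a := v a t)
    ((h.continuousOn_time (right_mem_Icc.2 hαβ.le)).mono hst) hβ with hnonpos | hpos
  · exact h.exists_isAlternation_of_left hst hle hl hα (by simpa using hnonpos)
  have hneg : ∀ x ∈ l.getLast?, v x t * v a t < 0 := fun x hx =>
    ((List.isChain_append.1 hl.isChain).2.2 x hx a (by simp)).2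
  obtain ⟨l', hl', hll'⟩ := h.exists_isAlternation_of_left hst hle hl.left_of_append hα
    fun x hx r hr => by
      have hax : v a t * v x t < 0 := by linarith [hneg x hx]
      linarith [mul_neg_of_mul_pos_of_mul_neg (hpos r hr) hax]
  obtain ⟨z, hz, hl'z, hzpos⟩ := exists_getLast_lt_pos (f := fun y => v a t * v y s) hαβ
    (continuousOn_const.mul (h.continuousOn_space (hst hs))) (hpos s hs) hl'.mem
  refine ⟨l' ++ [z], hl'.append (.singleton hz (right_ne_zero_of_mul hzpos.ne'))
    fun y hy z' hz' => ?_, List.rel_append hll' (.cons hzpos .nil)⟩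
  obtain rfl : z = z' := by simpa using hz'
  obtain ⟨x, hx, hxy⟩ := forall₂_exists_mem_getLast? hll' hy
  exact ⟨hl'z y hy, mul_neg_of_mul_neg_of_mul_pos_of_mul_pos (hneg x hx) hxy hzpos⟩

lemma alternationNumber_le (h : IsParabolicSolution B c v α β t1 t2)
    (hst : Icc s t ⊆ Ioo t1 t2) (hle : s ≤ t)
    (hα : (∀ r ∈ Icc s t, v α r = 0) ∨ ∀ r ∈ Icc s t, v α r ≠ 0)
    (hβ : (∀ r ∈ Icc s t, v β r = 0) ∨ ∀ r ∈ Icc s t, v β r ≠ 0) :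
    alternationNumber (fun x => v x t) (Ioo α β) ≤
      alternationNumber (fun x => v x s) (Ioo α β) := by
  refine iSup_le fun ⟨l, hl⟩ => ?_
  obtain ⟨l', hl', hll'⟩ := h.exists_isAlternation_of_le hst hle hl hα hβ
  simpa [hll'.length_eq] using hl'.length_le_alternationNumber

end IsParabolicSolution

/-! ### Counting zeros while the alternation number is constant -/

namespace IsParabolicSolution

variable {B c v : ℝ → ℝ → ℝ} {α β t1 t2 T t : ℝ} {l l₁ l₂ : List ℝ} {a b z : ℝ}

lemma ne_zero_of_mem_uIoo (h : IsParabolicSolution B c v α β t1 t2) (hTt : T < t)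
    (hsub : Icc T t ⊆ Ioo t1 t2) (ha : a ∈ Ioo α β) (hb : b ∈ Ioo α β) (hz : z ∈ uIoo a b)
    (hat : v a t ≠ 0) (hnonneg : ∀ r ∈ Icc T t, ∀ x ∈ uIcc a b, 0 ≤ v a t * v x r) :
    v z t ≠ 0 := by
  obtain ⟨M, hM⟩ := h.exists_solvesOffCritical (ordConnected_Ioo.uIcc_subset ha hb) hsub
  have hpos : 0 < v a t * v z t := (hM.const_mul (v a t)).pos_of_endpoint_pos hTt hz
    (fun r hr _ => hnonneg r hr) (mul_self_pos.2 hat)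
  exact right_ne_zero_of_mul hpos.ne'

lemma mul_pos_of_mem_isAlternation (h : IsParabolicSolution B c v α β t1 t2) (hTt : T ≤ t)
    (hsub : Icc T t ⊆ Ioo t1 t2)
    (hl : ∀ r ∈ Icc T t, IsAlternation (fun x => v x r) (Ioo α β) l) (ha : a ∈ l) :
    ∀ r ∈ Icc T t, 0 < v a t * v a r := by
  have haI : a ∈ Ioo α β := (hl t (right_mem_Icc.2 hTt)).mem a ha
  exact fun r hr => mul_pos_of_continuousOn_of_ne_zero
    ((h.continuousOn_time (Ioo_subset_Icc_self haI)).mono hsub)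
    (fun r hr => (hl r hr).ne_zero a ha) (right_mem_Icc.2 hTt) hr

lemma ne_zero_of_lt_head (h : IsParabolicSolution B c v α β t1 t2) (hTt : T < t)
    (hsub : Icc T t ⊆ Ioo t1 t2)
    (hl : ∀ r ∈ Icc T t, IsAlternation (fun x => v x r) (Ioo α β) l)
    (hmax : ∀ r ∈ Icc T t, alternationNumber (fun x => v x r) (Ioo α β) ≤ l.length)
    (ha : a ∈ l.head?) (hz : z ∈ Ioo α a) : v z t ≠ 0 := by
  have hal : a ∈ l := List.mem_of_mem_head? ha
  have hpos := h.mul_pos_of_mem_isAlternation hTt.le hsub hl hal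
  have haI : a ∈ Ioo α β := (hl t (right_mem_Icc.2 hTt.le)).mem a hal
  obtain ⟨p, hαp, hpz⟩ := exists_between hz.1
  have hpa : p < a := hpz.trans hz.2
  refine h.ne_zero_of_mem_uIoo hTt hsub haI ⟨hαp, hpa.trans haI.2⟩
    (by rw [uIoo_of_gt hpa]; exact ⟨hpz, hz.2⟩) (left_ne_zero_of_mul (hpos t ⟨hTt.le, le_rfl⟩).ne')
    fun r hr x hx => ?_
  rw [uIcc_of_gt hpa] at hx
  obtain rfl | hxa := hx.2.eq_or_lt
  · exact (hpos r hr).le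
  · exact (hl r hr).mul_nonneg_of_lt_head (hmax r hr) ha (hpos r hr)
      ⟨hαp.trans_le hx.1, hxa.trans haI.2⟩ hxa

lemma ne_zero_of_getLast_lt (h : IsParabolicSolution B c v α β t1 t2) (hTt : T < t)
    (hsub : Icc T t ⊆ Ioo t1 t2)
    (hl : ∀ r ∈ Icc T t, IsAlternation (fun x => v x r) (Ioo α β) l)
    (hmax : ∀ r ∈ Icc T t, alternationNumber (fun x => v x r) (Ioo α β) ≤ l.length)
    (ha : a ∈ l.getLast?) (hz : z ∈ Ioo a β) : v z t ≠ 0 := by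
  have hal : a ∈ l := List.mem_of_mem_getLast? ha
  have hpos := h.mul_pos_of_mem_isAlternation hTt.le hsub hl hal
  have haI : a ∈ Ioo α β := (hl t (right_mem_Icc.2 hTt.le)).mem a hal
  obtain ⟨q, hzq, hqβ⟩ := exists_between hz.2
  have haq : a < q := hz.1.trans hzq
  refine h.ne_zero_of_mem_uIoo hTt hsub haI ⟨haI.1.trans haq, hqβ⟩
    (by rw [uIoo_of_lt haq]; exact ⟨hz.1, hzq⟩) (left_ne_zero_of_mul (hpos t ⟨hTt.le, le_rfl⟩).ne')
    fun r hr x hx => ?_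
  rw [uIcc_of_lt haq] at hx
  obtain rfl | hax := hx.1.eq_or_lt
  · exact (hpos r hr).le
  · exact (hl r hr).mul_nonneg_of_getLast_lt (hmax r hr) ha (hpos r hr)
      ⟨haI.1.trans hax, hx.2.trans_lt hqβ⟩ hax

lemma subsingleton_zeros_inter_Icc (h : IsParabolicSolution B c v α β t1 t2) (hTt : T < t)
    (hsub : Icc T t ⊆ Ioo t1 t2)
    (hl : ∀ r ∈ Icc T t, IsAlternation (fun x => v x r) (Ioo α β) (l₁ ++ a :: b :: l₂))
    (hmax : ∀ r ∈ Icc T t,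
      alternationNumber (fun x => v x r) (Ioo α β) ≤ (l₁ ++ a :: b :: l₂).length) :
    ({x ∈ Ioo α β | v x t = 0} ∩ Icc a b).Subsingleton := by
  have ht : t ∈ Icc T t := right_mem_Icc.2 hTt.le
  have haI : a ∈ Ioo α β := (hl t ht).mem a (by simp)
  have hbI : b ∈ Ioo α β := (hl t ht).mem b (by simp)
  have hab : Icc a b ⊆ Ioo α β := ordConnected_Ioo.out haI hbI
  have hpos := h.mul_pos_of_mem_isAlternation (a := a) hTt.le hsub hl (by simp)
  have hneg : ∀ r ∈ Icc T t, v a t * v b r < 0 := fun r hr =>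
    mul_neg_of_mul_pos_of_mul_neg (by linarith [hpos r hr])
      (List.isChain_append_cons_cons.1 (hl r hr).isChain).2.1.2
  obtain ⟨M, hM⟩ := h.exists_solvesOffCritical hab hsub
  have hsign : HasSingleSignChange B c (fun x r => v a t * v x r) M a b T t :=
    { hM.const_mul (v a t) with
      pos_left := hpos
      neg_right := hneg
      nonpos_of_neg r hr y hy z hz hyz hyneg := by
        obtain rfl | hay := hy.1.eq_or_lt
        · exact absurd hyneg (hpos r hr).not_gt
        obtain rfl | hzb := hz.2.eq_or_lt
        · exact (hneg r hr).le
        exact (hl r hr).mul_nonpos_of_mul_neg_of_lt (hmax r hr) (hab hy) (hab hz) hay hyz hzb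
          (hpos r hr) hyneg }
  exact (hsign.subsingleton_zeros hTt).anti fun z hz => ⟨hz.2, by simp [hz.1.2]⟩

lemma encard_zeros_add_one_le_length (h : IsParabolicSolution B c v α β t1 t2) (hTt : T < t)
    (hsub : Icc T t ⊆ Ioo t1 t2)
    (hl : ∀ r ∈ Icc T t, IsAlternation (fun x => v x r) (Ioo α β) l)
    (hmax : ∀ r ∈ Icc T t, alternationNumber (fun x => v x r) (Ioo α β) ≤ l.length)
    (hne : l ≠ []) : {x ∈ Ioo α β | v x t = 0}.encard + 1 ≤ l.length := by
  obtain ⟨a, l, rfl⟩ := List.exists_cons_of_ne_nil hne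
  have hlt := hl t (right_mem_Icc.2 hTt.le)
  have hhead : {x ∈ Ioo α β | v x t = 0} ∩ Ici a = {x ∈ Ioo α β | v x t = 0} :=
    inter_eq_left.2 fun z hz => not_lt.1 fun hza =>
      h.ne_zero_of_lt_head hTt hsub hl hmax (by simp) ⟨hz.1.1, hza⟩ hz.2
  have hgap : (a :: l).IsChain fun x y =>
      ({x ∈ Ioo α β | v x t = 0} ∩ Icc x y).Subsingleton :=
    List.isChain_iff_forall_rel_of_append_cons_cons.2 fun {x y l₁ l₂} hsplit => by
      rw [hsplit] at hl hmax
      exact h.subsingleton_zeros_inter_Icc hTt hsub hl hmax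
  have hlast : ∀ b ∈ (a :: l).getLast?, ∀ z ∈ {x ∈ Ioo α β | v x t = 0}, z < b := by
    intro b hb z hz
    by_contra! hbz
    obtain rfl | hbz := hbz.eq_or_lt
    · exact hlt.ne_zero b (List.mem_of_mem_getLast? hb) hz.2
    · exact h.ne_zero_of_getLast_lt hTt hsub hl hmax hb ⟨hbz, hz.1.2⟩ hz.2
  rw [← hhead, List.length_cons, Nat.cast_add_one]
  gcongr
  exact encard_inter_Ici_le_length hgap hlast

end IsParabolicSolution

namespace IsParabolicSolution

variable {B c v : ℝ → ℝ → ℝ} {α β t1 t2 s t T : ℝ} {l : List ℝ} {N : ℕ∞}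

lemma exists_forall_isAlternation (h : IsParabolicSolution B c v α β t1 t2) (hTt : T < t)
    (hsub : Icc T t ⊆ Ioo t1 t2) (hl : IsAlternation (fun x => v x t) (Ioo α β) l) :
    ∃ S ∈ Ico T t, ∀ r ∈ Icc S t, IsAlternation (fun x => v x r) (Ioo α β) l := by
  have hnear : ∀ᶠ r in 𝓝[≤] t, ∀ x ∈ l, 0 < v x t * v x r := by
    refine (eventually_all_finite l.finite_toSet).2 fun x hx => ?_
    have hcont : ContinuousOn (fun r => v x t * v x r) (Icc T t) := continuousOn_const.mul
      ((h.continuousOn_time (Ioo_subset_Icc_self (hl.mem x hx))).mono hsub)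
    rw [← nhdsWithin_Icc_eq_nhdsLE hTt]
    exact (hcont t ⟨hTt.le, le_rfl⟩).eventually (lt_mem_nhds (mul_self_pos.2 (hl.ne_zero x hx)))
  obtain ⟨S, hS, hpos⟩ := mem_nhdsLE_iff_exists_Icc_subset.1 hnear
  exact ⟨max T S, ⟨le_max_left _ _, max_lt hTt hS⟩, fun r hr =>
    hl.of_mul_pos (hpos ⟨(le_max_right _ _).trans hr.1, hr.2⟩)⟩

theorem encard_zeros_add_one_eq (h : IsParabolicSolution B c v α β t1 t2) (hTt : T < t)
    (hsub : Icc T t ⊆ Ioo t1 t2)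
    (hN : ∀ r ∈ Icc T t, alternationNumber (fun x => v x r) (Ioo α β) = N) (hN0 : N ≠ 0) :
    {x ∈ Ioo α β | v x t = 0}.encard + 1 = N := by
  have ht : t ∈ Icc T t := right_mem_Icc.2 hTt.le
  refine le_antisymm ?_ ?_
  · obtain rfl | hNtop := eq_or_ne N ⊤
    · exact le_top
    obtain ⟨l, hl, hlen⟩ :=
      exists_isAlternation_of_alternationNumber_ne_top ((hN t ht).trans_ne hNtop)
    rw [hN t ht] at hlen
    obtain ⟨S, ⟨hTS, hSt⟩, hlS⟩ := h.exists_forall_isAlternation hTt hsub hl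
    have hST : Icc S t ⊆ Icc T t := Icc_subset_Icc_left hTS
    rw [hlen]
    exact h.encard_zeros_add_one_le_length hSt (hST.trans hsub) hlS
      (fun r hr => ((hN r (hST hr)).trans hlen).le) (by rintro rfl; simp [hlen] at hN0)
  · rw [← hN t ht]
    exact alternationNumber_le_encard_zeros_add_one ordConnected_Ioo
      ((h.continuousOn_space (hsub ht)).mono Ioo_subset_Icc_self)

lemma encard_interior_zeros_eq (h : IsParabolicSolution B c v α β t1 t2) {t0 : ℝ}
    (hsub : Ioo T t0 ⊆ Ioo t1 t2)
    (hN : ∀ r ∈ Ioo T t0, alternationNumber (fun x => v x r) (Ioo α β) = N)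
    (hs : s ∈ Ioo T t0) (ht : t ∈ Ioo T t0) :
    {x ∈ Ioo α β | v x s = 0}.encard = {x ∈ Ioo α β | v x t = 0}.encard := by
  obtain rfl | hN0 := eq_or_ne N 0
  · have hall {r : ℝ} (hr : r ∈ Ioo T t0) : {x ∈ Ioo α β | v x r = 0} = Ioo α β :=
      sep_eq_self_iff_mem_true.2 fun x hx => eq_zero_of_alternationNumber_eq_zero (hN r hr) hx
    rw [hall hs, hall ht]
  · have hcount {r : ℝ} (hr : r ∈ Ioo T t0) : {x ∈ Ioo α β | v x r = 0}.encard + 1 = N := by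
      obtain ⟨S, hTS, hSr⟩ := exists_between hr.1
      have hSub : Icc S r ⊆ Ioo T t0 := Icc_subset_Ioo hTS hr.2
      exact h.encard_zeros_add_one_eq hSr (hSub.trans hsub) (fun q hq => hN q (hSub hq)) hN0
    exact WithTop.add_right_cancel ENat.one_ne_top ((hcount hs).trans (hcount ht).symm)

end IsParabolicSolution

lemma exists_forall_Ioo_eq_of_antitoneOn {ι : Type*} [PartialOrder ι] [WellFoundedLT ι]
    {g : ℝ → ι} {t1 t2 t0 : ℝ} (hg : AntitoneOn g (Ioo t1 t2)) (ht0 : t0 ∈ Ioo t1 t2) :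
    ∃ T ∈ Ioo t1 t0, ∃ N, ∀ t ∈ Ioo T t0, g t = N := by
  have hne : (Ioo t1 t0).Nonempty := nonempty_Ioo.2 ht0.1
  have hsub : Ioo t1 t0 ⊆ Ioo t1 t2 := Ioo_subset_Ioo_right ht0.2.le
  set T := Function.argminOn g (Ioo t1 t0) hne
  have hT : T ∈ Ioo t1 t0 := Function.argminOn_mem g (Ioo t1 t0) hne
  refine ⟨T, hT, g T, fun t ht => ?_⟩
  have ht' : t ∈ Ioo t1 t0 := Ioo_subset_Ioo_left hT.1.le ht
  exact eq_of_le_of_not_lt (hg (hsub hT) (hsub ht') ht.1.le)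
    (Function.not_lt_argminOn g (Ioo t1 t0) ht')

lemma encard_sep_Icc {ι : Type*} [LinearOrder ι] {a b : ι} (hab : a ≤ b) (p : ι → Prop) :
    {x ∈ Icc a b | p x}.encard =
      {x ∈ Ioo a b | p x}.encard + {x ∈ ({a, b} : Set ι) | p x}.encard := by
  rw [← Ioo_union_both hab, ← encard_union_eq]
  · exact congrArg encard (union_inter_distrib_right _ _ {x | p x})
  · refine disjoint_left.2 fun x hx hx' => ?_
    rcases hx'.1 with rfl | rfl
    exacts [hx.1.1.false, hx.1.2.false]

theorem zero_number_constant_before_general {B c v : ℝ → ℝ → ℝ} {α β t1 t2 t0 : ℝ} (hαβ : α ≤ β)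
    (h : IsParabolicSolution B c v α β t1 t2)
    (hα : (∀ t ∈ Ioo t1 t2, v α t = 0) ∨ ∀ t ∈ Ioo t1 t2, v α t ≠ 0)
    (hβ : (∀ t ∈ Ioo t1 t2, v β t = 0) ∨ ∀ t ∈ Ioo t1 t2, v β t ≠ 0) (ht0 : t0 ∈ Ioo t1 t2) :
    ∃ T ∈ Ioo t1 t0, ∀ s ∈ Ioo T t0, ∀ t ∈ Ioo T t0,
      {x ∈ Icc α β | v x s = 0}.encard = {x ∈ Icc α β | v x t = 0}.encard := by
  have hanti : AntitoneOn (fun t => alternationNumber (fun x => v x t) (Ioo α β)) (Ioo t1 t2) := by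
    intro s hs t ht hst
    have hsub : Icc s t ⊆ Ioo t1 t2 := Icc_subset_Ioo hs.1 ht.2
    exact h.alternationNumber_le hsub hst
      (hα.imp (fun h r hr => h r (hsub hr)) fun h r hr => h r (hsub hr))
      (hβ.imp (fun h r hr => h r (hsub hr)) fun h r hr => h r (hsub hr))
  obtain ⟨T, hT, N, hN⟩ := exists_forall_Ioo_eq_of_antitoneOn hanti ht0
  have hsub : Ioo T t0 ⊆ Ioo t1 t2 := Ioo_subset_Ioo hT.1.le ht0.2.le
  refine ⟨T, hT, fun s hs t ht => ?_⟩
  have hend : ∀ x ∈ ({α, β} : Set ℝ), v x s = 0 ↔ v x t = 0 := by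
    have hiff {x : ℝ} (hx : (∀ t ∈ Ioo t1 t2, v x t = 0) ∨ ∀ t ∈ Ioo t1 t2, v x t ≠ 0) :
        v x s = 0 ↔ v x t = 0 :=
      hx.elim (fun h => iff_of_true (h s (hsub hs)) (h t (hsub ht)))
        fun h => iff_of_false (h s (hsub hs)) (h t (hsub ht))
    rintro x (rfl | rfl)
    exacts [hiff hα, hiff hβ]
  rw [encard_sep_Icc hαβ, encard_sep_Icc hαβ, h.encard_interior_zeros_eq hsub hN hs ht,
    sep_ext_iff.2 hend]

/-! ### Inverse-square potentials -/

lemma bddAbove_image_neg_div_sq {b : ℝ → ℝ → ℝ} {R s t : ℝ}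
    (hb : ContinuousOn (fun p : ℝ × ℝ => b p.1 p.2) (Icc 0 R ×ˢ Icc s t))
    (hb0 : ∀ r ∈ Icc s t, 0 < b 0 r) :
    BddAbove ((fun p : ℝ × ℝ => -(b p.1 p.2 / p.1 ^ 2)) '' (Ioo 0 R ×ˢ Icc s t)) := by
  set K : Set (ℝ × ℝ) := {p ∈ Icc 0 R ×ˢ Icc s t | b p.1 p.2 ≤ 0}
  have hK : IsCompact K := (isCompact_Icc.prod isCompact_Icc).of_isClosed_subset
    (hb.preimage_isClosed_of_isClosed (isClosed_Icc.prod isClosed_Icc) isClosed_Iic)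
    inter_subset_left
  have hne : ∀ p ∈ K, p.1 ^ 2 ≠ 0 := by
    rintro ⟨x, r⟩ ⟨⟨-, hr⟩, hle⟩ hx
    obtain rfl : x = 0 := pow_eq_zero_iff two_ne_zero |>.1 hx
    exact (hb0 r hr).not_ge hle
  obtain ⟨C, hC⟩ := hK.bddAbove_image
    ((hb.mono inter_subset_left).div (by fun_prop) hne).neg
  refine ⟨max C 0, ?_⟩
  rintro _ ⟨p, hp, rfl⟩
  rcases le_or_gt (b p.1 p.2) 0 with hle | hpos
  · exact (hC ⟨p, ⟨prod_mono_left Ioo_subset_Icc_self hp, hle⟩, rfl⟩).trans (le_max_left _ _)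
  · exact (neg_nonpos.2 (by positivity)).trans (le_max_right _ _)

lemma solvesAt_of_contDiffAt {B c v : ℝ → ℝ → ℝ} {x t : ℝ}
    (hv : ContDiffAt ℝ 2 (fun p : ℝ × ℝ => v p.1 p.2) (x, t))
    (hpde : deriv (v x) t = deriv (deriv (fun y => v y t)) x + B x t * deriv (fun y => v y t) x +
      c x t * v x t) :
    SolvesAt B c v x t := by
  have hspace : ContDiffAt ℝ 2 (fun y => v y t) x :=
    ContDiffAt.comp (f := fun y : ℝ => (y, t)) x hv (by fun_prop)
  have htime : ContDiffAt ℝ 2 (v x) t :=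
    ContDiffAt.comp (f := fun r : ℝ => (x, r)) t hv (by fun_prop)
  exact ⟨hspace, hpde ▸ (htime.differentiableAt two_ne_zero).hasDerivAt⟩

lemma isParabolicSolution_div_sq {k R t1 t2 : ℝ} {b v : ℝ → ℝ → ℝ}
    (hb : ContinuousOn (fun p : ℝ × ℝ => b p.1 p.2) (Icc 0 R ×ˢ Ioo t1 t2))
    (hb0 : ∀ t ∈ Ioo t1 t2, 0 < b 0 t)
    (hv : ContDiffOn ℝ 2 (fun p : ℝ × ℝ => v p.1 p.2) (Icc 0 R ×ˢ Ioo t1 t2))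
    (hpde : ∀ r ∈ Ioo 0 R, ∀ t ∈ Ioo t1 t2,
      deriv (fun s => v r s) t = deriv (deriv (fun x => v x t)) r +
        k / r * deriv (fun x => v x t) r - b r t / r ^ 2 * v r t) :
    IsParabolicSolution (fun r _ => k / r) (fun r t => -(b r t / r ^ 2)) v 0 R t1 t2 where
  continuousOn := hv.continuousOn
  solvesAt r hr t ht := by
    refine solvesAt_of_contDiffAt
      (hv.contDiffAt (prod_mem_nhds (Icc_mem_nhds hr.1 hr.2) (Ioo_mem_nhds ht.1 ht.2))) ?_
    rw [hpde r hr t ht]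
    ring
  bddAbove_abs_drift K hKsub hK := hK.bddAbove_image
    (continuousOn_const.div continuousOn_fst fun p hp => (hKsub hp).1.1.ne').abs
  bddAbove_abs_potential K hKsub hK := hK.bddAbove_image
    ((hb.mono (hKsub.trans (prod_mono_left Ioo_subset_Icc_self))).div (by fun_prop)
      fun p hp => (pow_pos (hKsub hp).1.1 2).ne').neg.abs
  bddAbove_potential s t hst := bddAbove_image_neg_div_sq (hb.mono (prod_mono_right hst))
    fun r hr => hb0 r (hst hr)

theorem zero_number_constant_before
    (m : ℕ) (hm : 2 ≤ m) (R t1 t2 : ℝ) (hR : 0 < R) (ht12 : t1 < t2)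
    (b v : ℝ → ℝ → ℝ)
    (hb_smooth : ContDiffOn ℝ (⊤ : ℕ∞) (fun p : ℝ × ℝ => b p.1 p.2) (Icc 0 R ×ˢ Ioo t1 t2))
    (hb_bdd : ∃ C : ℝ, ∀ r ∈ Icc (0:ℝ) R, ∀ t ∈ Ioo t1 t2, |b r t| ≤ C)
    (hb_deriv_bdd : ∃ C : ℝ, ∀ r ∈ Icc (0:ℝ) R, ∀ t ∈ Ioo t1 t2,
      |deriv (fun x => b x t) r| ≤ C ∧ |deriv (fun s => b r s) t| ≤ C)
    (hb0 : ∀ t ∈ Ioo t1 t2, b 0 t = (m : ℝ) - 1)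
    (hbr0 : ∀ t ∈ Ioo t1 t2, deriv (fun x => b x t) 0 = 0)
    (hv_smooth : ContDiffOn ℝ (⊤ : ℕ∞) (fun p : ℝ × ℝ => v p.1 p.2) (Icc 0 R ×ˢ Ioo t1 t2))
    (hpde : ∀ r ∈ Ioo (0:ℝ) R, ∀ t ∈ Ioo t1 t2,
      deriv (fun s => v r s) t =
        deriv (deriv (fun x => v x t)) r + (((m : ℝ) - 1) / r) * deriv (fun x => v x t) r
          - (b r t / r ^ 2) * v r t)
    (hbc0 : (∀ t ∈ Ioo t1 t2, v 0 t = 0) ∨ (∀ t ∈ Ioo t1 t2, v 0 t ≠ 0))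
    (hbcR : (∀ t ∈ Ioo t1 t2, v R t = 0) ∨ (∀ t ∈ Ioo t1 t2, v R t ≠ 0))
    (hnz : ¬ ∀ r ∈ Icc (0:ℝ) R, ∀ t ∈ Ioo t1 t2, v r t = 0)
    :
    ∀ t0 ∈ Ioo t1 t2, ∃ ε0 : ℝ, 0 < ε0 ∧ t1 < t0 - ε0 ∧
      ∀ s ∈ Ioo (t0 - ε0) t0, ∀ t ∈ Ioo (t0 - ε0) t0,
        {r ∈ Icc (0:ℝ) R | v r s = 0}.ncard = {r ∈ Icc (0:ℝ) R | v r t = 0}.ncard := by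
  intro t0 ht0
  have hm1 : (0 : ℝ) < m - 1 := sub_pos.2 (by exact_mod_cast hm)
  have hsol := isParabolicSolution_div_sq hb_smooth.continuousOn
    (fun t ht => (hb0 t ht).symm ▸ hm1)
    (hv_smooth.of_le (WithTop.coe_le_coe.2 (le_top (a := (2 : ℕ∞))))) hpde
  obtain ⟨T, hT, hcard⟩ := zero_number_constant_before_general hR.le hsol hbc0 hbcR ht0
  refine ⟨t0 - T, sub_pos.2 hT.2, ?_, ?_⟩ <;> rw [sub_sub_cancel]
  exacts [hT.1, fun s hs t ht => congrArg ENat.toNat (hcard s hs t ht)]
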